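/- arXiv:1605.09701 — 2 statements merged into one kernel-verified Lean document; each statement's English description precedes it below -/
import Mathlib

section
/- Let P be the R-measure, c = (1/2, √3/6), α₃ = {S₁(c), S₂(c), S₃(c)}, and let ℓ ≥ 1 and n satisfy 2·3^ℓ < n < 3^{ℓ+1}. Let α₂ be any optimal set of two-means for P and let J ⊆ {1,2,3}^ℓ with card J = n − 2·3^ℓ. Then the set ⋃_{ω ∈ J} S_ω(α₃) ∪ ⋃_{ω ∈ {1,2,3}^ℓ \ J} S_ω(α₂) is an optimal set of n-means for P, where S_ω(β) = {S_ω(a) : a ∈ β}. -/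
open MeasureTheory ENNReal

noncomputable section

abbrev E2 : Type := EuclideanSpace ℝ (Fin 2)

/-- The point (a, b) of the Euclidean plane. -/
def pt (a b : ℝ) : E2 := (WithLp.equiv 2 (Fin 2 → ℝ)).symm ![a, b]

/-- S₁(x) = x/3. -/
def S1 : E2 → E2 := fun x => (3 : ℝ)⁻¹ • x

/-- S₂(x) = x/3 + (2/3, 0). -/
def S2 : E2 → E2 := fun x => (3 : ℝ)⁻¹ • x + pt (2/3) 0

/-- S₃(x) = x/3 + (1/3, √3/3). -/
def S3 : E2 → E2 := fun x => (3 : ℝ)⁻¹ • x + pt (1/3) (Real.sqrt 3 / 3)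

def Smap : Fin 3 → E2 → E2 := ![S1, S2, S3]

/-- For a word ω = ω₁⋯ω_k ∈ {1,2,3}^k, the composition S_ω = S_{ω₁} ∘ ⋯ ∘ S_{ω_k}. -/
def Sword {k : ℕ} (ω : Fin k → Fin 3) : E2 → E2 :=
  fun x => (List.ofFn fun i => Smap (ω i)).foldr (fun g y => g y) x

/-- The closed triangle with vertices (0,0), (1,0), (1/2, √3/2). -/
def Tri : Set E2 := convexHull ℝ {pt 0 0, pt 1 0, pt (1/2) (Real.sqrt 3 / 2)}

/-- The distortion error ∫ min_{a ∈ α} ‖x − a‖² dμ of a set α of points. -/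
def err (μ : Measure E2) (α : Set E2) : ℝ≥0∞ :=
  ∫⁻ x, ⨅ a ∈ α, ENNReal.ofReal (‖x - a‖ ^ 2) ∂μ

/-- The n-th quantization error V_n(μ). -/
def quantErr (μ : Measure E2) (n : ℕ) : ℝ≥0∞ :=
  ⨅ (α : Set E2) (_ : α.Finite ∧ α.ncard ≤ n), err μ α

/-- α is an optimal set of n-means for μ. -/
def IsOptimal (μ : Measure E2) (n : ℕ) (α : Set E2) : Prop :=
  α.Finite ∧ α.ncard ≤ n ∧ err μ α = quantErr μ n

/-! ### Barycentric coordinates -/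

/-- Barycentric coordinates with respect to the vertices of the triangle. -/
def lam (x : E2) : Fin 3 → ℝ :=
  ![1 - x 0 - x 1 / Real.sqrt 3, x 0 - x 1 / Real.sqrt 3, 2 * (x 1 / Real.sqrt 3)]

def kd (i j : Fin 3) : ℝ := if i = j then 1 else 0

lemma sqrt3_pos : 0 < Real.sqrt 3 := by positivity

lemma sqrt3_sq : Real.sqrt 3 ^ 2 = 3 := Real.sq_sqrt (by norm_num)

lemma lam_sum (x : E2) : ∑ j, lam x j = 1 := by
  simp [Fin.sum_univ_three, lam]; ring

lemma lam_Smap (i j : Fin 3) (x : E2) : lam (Smap i x) j = lam x j / 3 + 2 / 3 * kd i j := by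
  have h := sqrt3_pos.ne'
  fin_cases i <;> fin_cases j <;>
    simp [lam, Smap, S1, S2, S3, pt, kd] <;> field_simp <;> ring

lemma norm_lam (x a : E2) : ‖x - a‖ ^ 2 = 1 / 2 * ∑ j, (lam x j - lam a j) ^ 2 := by
  rw [EuclideanSpace.norm_sq_eq]
  have h := sqrt3_pos.ne'
  have h2 : ∀ y : ℝ, y ^ 2 = 3 * (y / Real.sqrt 3) ^ 2 := by
    intro y; rw [div_pow, sqrt3_sq]; ring
  simp only [Fin.sum_univ_two, Fin.sum_univ_three, lam, Real.norm_eq_abs, sq_abs,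
    PiLp.sub_apply, Matrix.cons_val_zero, Matrix.cons_val_one, Matrix.cons_val]
  rw [h2 (x 1 - a 1), sub_div]
  ring

lemma continuous_lam (j : Fin 3) : Continuous fun x => lam x j := by
  fin_cases j <;> simp [lam] <;> fun_prop

lemma continuous_Smap (i : Fin 3) : Continuous (Smap i) := by
  fin_cases i
  · change Continuous fun x : E2 => (3 : ℝ)⁻¹ • x
    fun_prop
  · change Continuous fun x : E2 => (3 : ℝ)⁻¹ • x + pt (2/3) 0
    fun_prop
  · change Continuous fun x : E2 => (3 : ℝ)⁻¹ • x + pt (1/3) (Real.sqrt 3 / 3)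
    fun_prop

/-! ### The measure -/

/-- Self-similarity hypothesis. -/
def SS (P : Measure E2) : Prop := P = (3 : ℝ≥0∞)⁻¹ • (P.map S1 + P.map S2 + P.map S3)

lemma SS.lintegral {P : Measure E2} (hP : SS P) {f : E2 → ℝ≥0∞} (hf : Measurable f) :
    ∫⁻ x, f x ∂P = 3⁻¹ * ∑ i, ∫⁻ x, f (Smap i x) ∂P := by
  conv_lhs => rw [hP]
  have h1 : Measurable S1 := (continuous_Smap 0).measurable
  have h2 : Measurable S2 := (continuous_Smap 1).measurable
  have h3 : Measurable S3 := (continuous_Smap 2).measurable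
  rw [lintegral_smul_measure, lintegral_add_measure, lintegral_add_measure,
    lintegral_map hf h1, lintegral_map hf h2, lintegral_map hf h3, Fin.sum_univ_three]
  rfl

lemma SS.measure {P : Measure E2} (hP : SS P) {s : Set E2} (hs : MeasurableSet s) :
    P s = 3⁻¹ * ∑ i, P (Smap i ⁻¹' s) := by
  have := hP.lintegral (f := s.indicator 1) (measurable_one.indicator hs)
  rw [lintegral_indicator_one hs] at this
  rw [this]
  congr 1
  refine Finset.sum_congr rfl fun i _ => ?_
  rw [← lintegral_indicator_one ((continuous_Smap i).measurable hs)]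
  rfl

lemma SS.lam_nonneg {P : Measure E2} [IsProbabilityMeasure P] (hP : SS P) :
    ∀ᵐ x ∂P, ∀ j, 0 ≤ lam x j := by
  rw [ae_all_iff]
  intro j
  have hms : ∀ r : ℝ, MeasurableSet {x | lam x j < -r} := fun r =>
    measurableSet_lt (continuous_lam j).measurable measurable_const
  have step : ∀ r : ℝ, P {x | lam x j < -r} ≤ P {x | lam x j < -(3 * r)} := by
    intro r
    rw [hP.measure (hms r)]
    have : ∀ i, P (Smap i ⁻¹' {x | lam x j < -r}) ≤ P {x | lam x j < -(3 * r)} := by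
      intro i
      refine measure_mono fun x hx => ?_
      simp only [Set.mem_preimage, Set.mem_ofPred_eq, lam_Smap] at hx ⊢
      have : 0 ≤ kd i j := by unfold kd; split_ifs <;> norm_num
      linarith
    calc 3⁻¹ * ∑ i, P (Smap i ⁻¹' {x | lam x j < -r})
        ≤ 3⁻¹ * ∑ _i : Fin 3, P {x | lam x j < -(3 * r)} := by
          exact mul_le_mul_right (Finset.sum_le_sum fun i _ => this i) _
      _ = P {x | lam x j < -(3 * r)} := by
          simp only [Finset.sum_const, Finset.card_univ, Fintype.card_fin, nsmul_eq_mul]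
          rw [← mul_assoc]
          push_cast
          rw [ENNReal.inv_mul_cancel (by norm_num) (by norm_num), one_mul]
  have stepk : ∀ r : ℝ, ∀ k : ℕ, P {x | lam x j < -r} ≤ P {x | lam x j < -(3 ^ k * r)} := by
    intro r k
    induction k with
    | zero => simp
    | succ k ih =>
      refine ih.trans ((step _).trans (le_of_eq ?_))
      congr 3; ext; rw [pow_succ]; ring_nf
  have zero : ∀ r : ℝ, 0 < r → P {x | lam x j < -r} = 0 := by
    intro r hr
    have hanti : Antitone fun k : ℕ => {x | lam x j < -((3:ℝ) ^ k * r)} := by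
      intro a b hab x hx
      simp only [Set.mem_ofPred_eq] at hx ⊢
      have : (3:ℝ) ^ a * r ≤ 3 ^ b * r := by gcongr; norm_num
      linarith
    have ht := tendsto_measure_iInter_atTop (μ := P)
      (s := fun k : ℕ => {x | lam x j < -((3:ℝ) ^ k * r)})
      (fun k => (hms _).nullMeasurableSet) hanti ⟨0, measure_ne_top _ _⟩
    have he : ⋂ k : ℕ, {x | lam x j < -((3:ℝ) ^ k * r)} = ∅ := by
      ext x
      simp only [Set.mem_iInter, Set.mem_ofPred_eq, Set.mem_empty_iff_false, iff_false, not_forall,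
        not_lt]
      obtain ⟨k, hk⟩ := pow_unbounded_of_one_lt (-(lam x j) / r) (by norm_num : (1:ℝ) < 3)
      rw [div_lt_iff₀ hr] at hk
      exact ⟨k, by linarith⟩
    rw [he, measure_empty] at ht
    exact le_antisymm (ge_of_tendsto' ht (stepk r)) bot_le
  have : ∀ᵐ x ∂P, ∀ k : ℕ, -(1 / ((k : ℝ) + 1)) ≤ lam x j := by
    rw [ae_all_iff]
    intro k
    have := zero (1 / ((k : ℝ) + 1)) (by positivity)
    rw [ae_iff]
    simpa only [not_le] using this
  filter_upwards [this] with x hx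
  by_contra hneg
  push Not at hneg
  obtain ⟨k, hk⟩ := exists_nat_one_div_lt (neg_pos.mpr hneg)
  have := hx k
  linarith

lemma SS.lam_le_one {P : Measure E2} [IsProbabilityMeasure P] (hP : SS P) :
    ∀ᵐ x ∂P, ∀ j, lam x j ≤ 1 := by
  filter_upwards [hP.lam_nonneg] with x hx j
  rw [← lam_sum x]
  exact Finset.single_le_sum (f := lam x) (fun i _ => hx i) (Finset.mem_univ j)

/-- Continuous functions of the barycentric coordinates are integrable. -/
lemma SS.integrable {P : Measure E2} [IsProbabilityMeasure P] (hP : SS P)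
    {f : (Fin 3 → ℝ) → ℝ} (hf : Continuous f) : Integrable (fun x => f (lam x)) P := by
  have hc : IsCompact (Set.Icc (0 : Fin 3 → ℝ) 1) := isCompact_Icc
  obtain ⟨C, hC⟩ := hc.exists_bound_of_continuousOn hf.continuousOn
  have hl : Continuous lam := continuous_pi continuous_lam
  refine Integrable.of_bound (hf.comp hl).aestronglyMeasurable C ?_
  filter_upwards [hP.lam_nonneg, hP.lam_le_one] with x h0 h1
  exact hC _ ⟨h0, h1⟩

lemma lam_Smap' (i : Fin 3) (x : E2) :
    lam (Smap i x) = fun j => lam x j / 3 + 2 / 3 * kd i j := funext fun j => lam_Smap i j x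

lemma SS.integral {P : Measure E2} [IsProbabilityMeasure P] (hP : SS P)
    {f : (Fin 3 → ℝ) → ℝ} (hf : Continuous f) :
    ∫ x, f (lam x) ∂P = 1 / 3 * ∑ i, ∫ x, f (fun j => lam x j / 3 + 2 / 3 * kd i j) ∂P := by
  have hl : Continuous lam := continuous_pi continuous_lam
  have hfl : Continuous fun x => f (lam x) := hf.comp hl
  have hmap : ∀ i, ∫ x, f (lam x) ∂(P.map (Smap i))
      = ∫ x, f (fun j => lam x j / 3 + 2 / 3 * kd i j) ∂P := by
    intro i
    rw [integral_map (continuous_Smap i).aemeasurable hfl.aestronglyMeasurable]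
    simp only [lam_Smap']
  have hint : ∀ i, Integrable (fun x => f (lam x)) (P.map (Smap i)) := by
    intro i
    rw [integrable_map_measure hfl.aestronglyMeasurable (continuous_Smap i).aemeasurable]
    simp only [Function.comp_def, lam_Smap']
    exact hP.integrable (f := fun t => f (fun j => t j / 3 + 2 / 3 * kd i j)) (by fun_prop)
  have h0 : ∫ x, f (lam x) ∂(P.map S1) = _ := hmap 0
  have h1 : ∫ x, f (lam x) ∂(P.map S2) = _ := hmap 1
  have h2 : ∫ x, f (lam x) ∂(P.map S3) = _ := hmap 2
  have i0 : Integrable (fun x => f (lam x)) (P.map S1) := hint 0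
  have i1 : Integrable (fun x => f (lam x)) (P.map S2) := hint 1
  have i2 : Integrable (fun x => f (lam x)) (P.map S3) := hint 2
  conv_lhs => rw [hP]
  rw [integral_smul_measure, integral_add_measure (i0.add_measure i1) i2,
    integral_add_measure i0 i1, Fin.sum_univ_three, ← h0, ← h1, ← h2]
  simp

lemma kd_sum (j : Fin 3) : kd 0 j + kd 1 j + kd 2 j = 1 := by
  fin_cases j <;> simp [kd]

lemma kd_sum_sq (j : Fin 3) : kd 0 j ^ 2 + kd 1 j ^ 2 + kd 2 j ^ 2 = 1 := by
  fin_cases j <;> simp [kd]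

lemma SS.int1 {P : Measure E2} [IsProbabilityMeasure P] (hP : SS P) (j : Fin 3) :
    ∫ x, lam x j ∂P = 1 / 3 := by
  have hi : Integrable (fun x => lam x j) P := hP.integrable (f := fun t => t j) (by fun_prop)
  have h := hP.integral (f := fun t => t j) (by fun_prop)
  have e : ∀ i, ∫ x, (lam x j / 3 + 2 / 3 * kd i j) ∂P
      = (∫ x, lam x j ∂P) / 3 + 2 / 3 * kd i j := by
    intro i
    rw [integral_add (hi.div_const _) (integrable_const _), integral_div]
    simp
  simp only [e, Fin.sum_univ_three] at h
  have := kd_sum j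
  linarith

lemma SS.int2 {P : Measure E2} [IsProbabilityMeasure P] (hP : SS P) (j : Fin 3) :
    ∫ x, lam x j ^ 2 ∂P = 2 / 9 := by
  have hi : Integrable (fun x => lam x j) P := hP.integrable (f := fun t => t j) (by fun_prop)
  have hi2 : Integrable (fun x => lam x j ^ 2) P :=
    hP.integrable (f := fun t => t j ^ 2) (by fun_prop)
  have h := hP.integral (f := fun t => t j ^ 2) (by fun_prop)
  have e : ∀ i, ∫ x, (lam x j / 3 + 2 / 3 * kd i j) ^ 2 ∂P
      = (∫ x, lam x j ^ 2 ∂P) / 9 + 4 / 27 * kd i j + 4 / 9 * kd i j ^ 2 := by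
    intro i
    have : ∀ x, (lam x j / 3 + 2 / 3 * kd i j) ^ 2
        = (1 / 9) * lam x j ^ 2 + (4 / 9 * kd i j) * lam x j + 4 / 9 * kd i j ^ 2 := by
      intro x; ring
    simp only [this]
    have hs : Integrable (fun x => (1 / 9) * lam x j ^ 2 + (4 / 9 * kd i j) * lam x j) P :=
      (hi2.const_mul _).add (hi.const_mul _)
    rw [integral_add hs (integrable_const _),
      integral_add (hi2.const_mul _) (hi.const_mul _), integral_const_mul, integral_const_mul,
      hP.int1]
    simp
    ring
  simp only [e, Fin.sum_univ_three] at h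
  have := kd_sum j
  have := kd_sum_sq j
  linarith

/-- Second moments of affine functions of a barycentric coordinate. -/
lemma SS.int_sq {P : Measure E2} [IsProbabilityMeasure P] (hP : SS P) (j : Fin 3) (u v : ℝ) :
    ∫ x, (u * lam x j + v) ^ 2 ∂P = u ^ 2 * (2 / 9) + 2 / 3 * u * v + v ^ 2 := by
  have hi : Integrable (fun x => lam x j) P := hP.integrable (f := fun t => t j) (by fun_prop)
  have hi2 : Integrable (fun x => lam x j ^ 2) P :=
    hP.integrable (f := fun t => t j ^ 2) (by fun_prop)
  have : ∀ x, (u * lam x j + v) ^ 2 = u ^ 2 * lam x j ^ 2 + (2 * u * v) * lam x j + v ^ 2 := by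
    intro x; ring
  simp only [this]
  have hs : Integrable (fun x => u ^ 2 * lam x j ^ 2 + (2 * u * v) * lam x j) P :=
    (hi2.const_mul _).add (hi.const_mul _)
  rw [integral_add hs (integrable_const _),
      integral_add (hi2.const_mul _) (hi.const_mul _), integral_const_mul, integral_const_mul,
      hP.int1, hP.int2]
  simp
  ring

/-! ### The dual potential -/

def Qf (t : Fin 3 → ℝ) : ℝ := 2 / 27 - 1 / 2 * ∑ j, (t j - 1 / 3) ^ 2

def Xf (y t : Fin 3 → ℝ) : ℝ := ∑ j, y j * (t j - 1 / 3) + Qf t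

def Xij (t : Fin 3 → ℝ) (i j : Fin 3) : ℝ := (2 * t i + t j) / 3 - 1 / 3 + Qf t

def Gf (P : Measure E2) (t : Fin 3 → ℝ) : ℝ := ∫ x, max (Xf (lam x) t) 0 ∂P

def U1 (t : Fin 3 → ℝ) : ℝ := 1 / 9 * ∑ i, ∑ j, max (Xij t i j) 0

def b2i (b : Bool) : ℤ := if b then 1 else 0

lemma comb_ineq : ∀ b11 b12 b13 b21 b22 b23 b31 b32 b33 : Bool,
    let k := b2i b11 + b2i b12 + b2i b13 + b2i b21 + b2i b22 + b2i b23
      + b2i b31 + b2i b32 + b2i b33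
    let n1 := 2 * (b2i b11 + b2i b12 + b2i b13) + (b2i b11 + b2i b21 + b2i b31) - k
    let n2 := 2 * (b2i b21 + b2i b22 + b2i b23) + (b2i b12 + b2i b22 + b2i b32) - k
    let n3 := 2 * (b2i b31 + b2i b32 + b2i b33) + (b2i b13 + b2i b23 + b2i b33) - k
    3 * (n1 * n1 + n2 * n2 + n3 * n3) + 4 * (k * k) ≤ 36 * k := by
  decide +kernel

lemma max_eq_b2i (a : ℝ) : max a 0 = (b2i (decide (0 < a)) : ℤ) * a := by
  by_cases h : 0 < a
  · simp [b2i, h, h.le]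
  · simp [b2i, h, not_lt.mp h]

lemma b2i_nonneg (b : Bool) : 0 ≤ b2i b := by cases b <;> simp [b2i]

lemma quad_bound (k n1 n2 n3 m1 m2 m3 : ℝ) (hk : 0 ≤ k)
    (h : 3 * (n1 * n1 + n2 * n2 + n3 * n3) + 4 * (k * k) ≤ 36 * k) :
    1 / 3 * (n1 * m1 + n2 * m2 + n3 * m3)
      + k * (2 / 27 - 1 / 2 * (m1 ^ 2 + m2 ^ 2 + m3 ^ 2)) ≤ 2 / 3 := by
  rcases hk.eq_or_lt with rfl | hk
  · have h1 : n1 = 0 := by nlinarith [mul_self_nonneg n1, mul_self_nonneg n2, mul_self_nonneg n3]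
    have h2 : n2 = 0 := by nlinarith [mul_self_nonneg n1, mul_self_nonneg n2, mul_self_nonneg n3]
    have h3 : n3 = 0 := by nlinarith [mul_self_nonneg n1, mul_self_nonneg n2, mul_self_nonneg n3]
    subst h1 h2 h3
    norm_num
  · refine le_of_mul_le_mul_left ?_ hk
    nlinarith [sq_nonneg (k * m1 - n1 / 3), sq_nonneg (k * m2 - n2 / 3),
      sq_nonneg (k * m3 - n3 / 3)]

lemma U1_le (t : Fin 3 → ℝ) (ht : ∑ j, t j = 1) : U1 t ≤ 2 / 27 := by
  unfold U1
  simp only [Fin.sum_univ_three] at ht ⊢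
  have hb := comb_ineq (decide (0 < Xij t 0 0)) (decide (0 < Xij t 0 1)) (decide (0 < Xij t 0 2))
    (decide (0 < Xij t 1 0)) (decide (0 < Xij t 1 1)) (decide (0 < Xij t 1 2))
    (decide (0 < Xij t 2 0)) (decide (0 < Xij t 2 1)) (decide (0 < Xij t 2 2))
  simp only [max_eq_b2i]
  have p := fun i j => b2i_nonneg (decide (0 < Xij t i j))
  have p11 := p 0 0
  have p12 := p 0 1
  have p13 := p 0 2
  have p21 := p 1 0
  have p22 := p 1 1
  have p23 := p 1 2
  have p31 := p 2 0
  have p32 := p 2 1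
  have p33 := p 2 2
  clear p
  generalize b2i (decide (0 < Xij t 0 0)) = b11 at *
  generalize b2i (decide (0 < Xij t 0 1)) = b12 at *
  generalize b2i (decide (0 < Xij t 0 2)) = b13 at *
  generalize b2i (decide (0 < Xij t 1 0)) = b21 at *
  generalize b2i (decide (0 < Xij t 1 1)) = b22 at *
  generalize b2i (decide (0 < Xij t 1 2)) = b23 at *
  generalize b2i (decide (0 < Xij t 2 0)) = b31 at *
  generalize b2i (decide (0 < Xij t 2 1)) = b32 at *
  generalize b2i (decide (0 < Xij t 2 2)) = b33 at *
  have hk : 0 ≤ b11 + b12 + b13 + b21 + b22 + b23 + b31 + b32 + b33 := by positivity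
  have hk' : (0 : ℝ) ≤ b11 + b12 + b13 + b21 + b22 + b23 + b31 + b32 + b33 := by exact_mod_cast hk
  simp only at hb
  have hb' := (Int.cast_le (R := ℝ)).mpr hb
  push_cast at hb'
  have := quad_bound _ _ _ _ (t 0 - 1 / 3) (t 1 - 1 / 3) (t 2 - 1 / 3) hk' hb'
  simp only [Xij, Qf, Fin.sum_univ_three]
  linear_combination 1 / 9 * this + 1 / 27 *
    ((b11 : ℝ) + b12 + b13 + b21 + b22 + b23 + b31 + b32 + b33) * ht

lemma kd_comb (i : Fin 3) (f : Fin 3 → ℝ) : ∑ j, kd i j * f j = f i := by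
  simp [kd]

lemma Xf_comb (l t : Fin 3 → ℝ) (hl : ∑ j, l j = 1) (i : Fin 3) :
    Xf (fun j => l j / 3 + 2 / 3 * kd i j) t = ∑ j, l j * Xij t i j := by
  have e1 : Xf (fun j => l j / 3 + 2 / 3 * kd i j) t
      = (∑ j, l j * (t j - 1 / 3)) / 3 + 2 / 3 * ∑ j, kd i j * (t j - 1 / 3) + Qf t := by
    simp only [Xf, Fin.sum_univ_three]; ring
  rw [e1, kd_comb i fun j => t j - 1 / 3]
  simp only [Xij, Fin.sum_univ_three] at hl ⊢
  linear_combination (-1) * ((2 * t i) / 3 - 2 / 9 + Qf t) * hl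

lemma Xf_comb' (l t : Fin 3 → ℝ) (hl : ∑ j, l j = 1) :
    Xf l t = ∑ j, l j * (t j - 1 / 3 + Qf t) := by
  simp only [Xf, Fin.sum_univ_three] at hl ⊢
  linear_combination (-1) * (Qf t) * hl

lemma continuous_Xf (t : Fin 3 → ℝ) : Continuous fun y => max (Xf y t) 0 := by
  unfold Xf; fun_prop

lemma Gf_nonneg (P : Measure E2) (t : Fin 3 → ℝ) : 0 ≤ Gf P t :=
  integral_nonneg fun _ => le_max_right _ _

lemma SS.Gf_le_U1 {P : Measure E2} [IsProbabilityMeasure P] (hP : SS P) (t : Fin 3 → ℝ) :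
    Gf P t ≤ U1 t := by
  unfold Gf U1
  rw [hP.integral (continuous_Xf t)]
  have hint : ∀ i j, Integrable (fun x => lam x j * max (Xij t i j) 0) P := fun i j =>
    hP.integrable (f := fun y => y j * max (Xij t i j) 0) (by fun_prop)
  have key : ∀ i, ∫ x, max (Xf (fun j => lam x j / 3 + 2 / 3 * kd i j) t) 0 ∂P
      ≤ 1 / 3 * ∑ j, max (Xij t i j) 0 := by
    intro i
    have hc : Continuous fun y : Fin 3 → ℝ => max (Xf (fun j => y j / 3 + 2 / 3 * kd i j) t) 0 := by
      unfold Xf; fun_prop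
    calc ∫ x, max (Xf (fun j => lam x j / 3 + 2 / 3 * kd i j) t) 0 ∂P
        ≤ ∫ x, ∑ j, lam x j * max (Xij t i j) 0 ∂P := by
          refine integral_mono_ae (hP.integrable hc) (integrable_finsetSum _ fun j _ => hint i j) ?_
          filter_upwards [hP.lam_nonneg] with x hx
          refine max_le ?_ (Finset.sum_nonneg fun j _ => mul_nonneg (hx j) (le_max_right _ _))
          rw [Xf_comb _ _ (lam_sum x)]
          exact Finset.sum_le_sum fun j _ => mul_le_mul_of_nonneg_left (le_max_left _ _) (hx j)
      _ = 1 / 3 * ∑ j, max (Xij t i j) 0 := by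
          rw [integral_finsetSum _ fun j _ => hint i j, Finset.mul_sum]
          refine Finset.sum_congr rfl fun j _ => ?_
          rw [integral_mul_const, hP.int1]
  have := Finset.sum_le_sum fun i (_ : i ∈ Finset.univ) => key i
  rw [← Finset.mul_sum] at this
  linarith

lemma SS.Gf_le {P : Measure E2} [IsProbabilityMeasure P] (hP : SS P) (t : Fin 3 → ℝ)
    (ht : ∑ j, t j = 1) : Gf P t ≤ 2 / 27 := (hP.Gf_le_U1 t).trans (U1_le t ht)

lemma SS.Gf_pos {P : Measure E2} [IsProbabilityMeasure P] (hP : SS P) (t : Fin 3 → ℝ)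
    (h : Gf P t ≠ 0) : ∃ i, 0 < t i - 1 / 3 + Qf t := by
  by_contra hcon
  push Not at hcon
  apply h
  unfold Gf
  refine integral_eq_zero_of_ae ?_
  filter_upwards [hP.lam_nonneg] with x hx
  simp only [Pi.zero_apply, max_eq_right_iff]
  rw [Xf_comb' _ _ (lam_sum x)]
  exact Finset.sum_nonpos fun j _ => mul_nonpos_of_nonneg_of_nonpos (hx j) (hcon j)

/-- Support of the potential. -/
lemma supp_core (a b c : ℝ) (hs : a + b + c = 1)
    (h : 0 < a - 1 / 3 + (2 / 27 - 1 / 2 * ((a - 1/3)^2 + (b - 1/3)^2 + (c - 1/3)^2))) :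
    -1 < a ∧ -1 < b ∧ -1 < c := by
  obtain rfl : c = 1 - a - b := by linarith
  refine ⟨?_, ?_, ?_⟩
  · nlinarith [sq_nonneg (a + 2 * b - 1), sq_nonneg (a + 1)]
  · by_contra hb
    push Not at hb
    nlinarith [sq_nonneg (2 * a + b - 2), sq_nonneg (b + 1)]
  · by_contra hb
    push Not at hb
    nlinarith [sq_nonneg (a - (1 - a - b) - 1 + (1 - a -b) - b), sq_nonneg (2 - a - b), sq_nonneg (a - b - 1)]

lemma supp_vertex (t : Fin 3 → ℝ) (ht : ∑ j, t j = 1) (i : Fin 3)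
    (h : 0 < t i - 1 / 3 + Qf t) (j : Fin 3) : -1 < t j := by
  simp only [Fin.sum_univ_three, Qf] at ht h
  fin_cases i
  · obtain ⟨h1, h2, h3⟩ := supp_core (t 0) (t 1) (t 2) ht h
    fin_cases j <;> assumption
  · obtain ⟨h1, h2, h3⟩ := supp_core (t 1) (t 0) (t 2) (by linarith) (by simp at h ⊢; linarith)
    fin_cases j <;> assumption
  · obtain ⟨h1, h2, h3⟩ := supp_core (t 2) (t 0) (t 1) (by linarith) (by simp at h ⊢; linarith)
    fin_cases j <;> assumption

/-- Two neighbouring cells: the dominating vertices. -/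
lemma lens_vertex (a b c q q' : ℝ) (hs : a + b + c = 1)
    (hq : q = 2 / 27 - 1 / 2 * ((a - 1/3)^2 + (b - 1/3)^2 + (c - 1/3)^2))
    (hq' : q' = 2 / 27 - 1 / 2 * ((a + 2 - 1/3)^2 + (b - 2 - 1/3)^2 + (c - 1/3)^2))
    (h1 : 0 < a - 1/3 + q ∨ 0 < b - 1/3 + q ∨ 0 < c - 1/3 + q)
    (h2 : 0 < a + 2 - 1/3 + q' ∨ 0 < b - 2 - 1/3 + q' ∨ 0 < c - 1/3 + q') :
    0 < a + 2 - 1/3 + q' := by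
  subst hq hq'
  obtain rfl : c = 1 - a - b := by linarith
  rcases h2 with h2 | h2 | h2
  · exact h2
  · exfalso
    rcases h1 with h1 | h1 | h1
    · nlinarith [sq_nonneg (2 * a - (-1)), sq_nonneg (2 * b - (3)), sq_nonneg (2 * (1 - a - b) - (0))]
    · nlinarith [sq_nonneg (2 * a - (-2)), sq_nonneg (2 * b - (4)), sq_nonneg (2 * (1 - a - b) - (0))]
    · nlinarith [sq_nonneg (2 * a - (-2)), sq_nonneg (2 * b - (3)), sq_nonneg (2 * (1 - a - b) - (1))]
  · exfalso
    rcases h1 with h1 | h1 | h1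
    · nlinarith [sq_nonneg (2 * a - (-1)), sq_nonneg (2 * b - (2)), sq_nonneg (2 * (1 - a - b) - (1))]
    · nlinarith [sq_nonneg (2 * a - (-2)), sq_nonneg (2 * b - (3)), sq_nonneg (2 * (1 - a - b) - (1))]
    · nlinarith [sq_nonneg (2 * a - (-2)), sq_nonneg (2 * b - (2)), sq_nonneg (2 * (1 - a - b) - (2))]

/-- Two neighbouring cells: bounds on the nine values. -/
lemma lens_core (a b c q q' : ℝ) (hs : a + b + c = 1)
    (hq : q = 2 / 27 - 1 / 2 * ((a - 1/3)^2 + (b - 1/3)^2 + (c - 1/3)^2))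
    (hq' : q' = 2 / 27 - 1 / 2 * ((a + 2 - 1/3)^2 + (b - 2 - 1/3)^2 + (c - 1/3)^2))
    (h : 0 < a + 2 - 1/3 + q') :
    (2 * a + a) / 3 - 1 / 3 + q ≤ 0 ∧
    (2 * a + b) / 3 - 1 / 3 + q ≤ 0 ∧
    (2 * a + c) / 3 - 1 / 3 + q ≤ 0 ∧
    (2 * b + a) / 3 - 1 / 3 + q ≤ 0 ∧
    (2 * b + b) / 3 - 1 / 3 + q ≤ 1 / 3 ∧
    (2 * b + c) / 3 - 1 / 3 + q ≤ 0 ∧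
    (2 * c + a) / 3 - 1 / 3 + q ≤ 0 ∧
    (2 * c + b) / 3 - 1 / 3 + q ≤ 0 ∧
    (2 * c + c) / 3 - 1 / 3 + q ≤ 0 := by
  subst hq hq'
  obtain rfl : c = 1 - a - b := by linarith
  refine ⟨?_, ?_, ?_, ?_, ?_, ?_, ?_, ?_, ?_⟩
  · nlinarith [sq_nonneg (2 * a - (0)), sq_nonneg (2 * b - (2)), sq_nonneg (2 * (1 - a - b) - (0))]
  · nlinarith [sq_nonneg (2 * a - (-1/3)), sq_nonneg (2 * b - (7/3)), sq_nonneg (2 * (1 - a - b) - (0))]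
  · nlinarith [sq_nonneg (2 * a - (-1/3)), sq_nonneg (2 * b - (2)), sq_nonneg (2 * (1 - a - b) - (1/3))]
  · nlinarith [sq_nonneg (2 * a - (-2/3)), sq_nonneg (2 * b - (8/3)), sq_nonneg (2 * (1 - a - b) - (0))]
  · nlinarith [sq_nonneg (2 * a - (-1)), sq_nonneg (2 * b - (3)), sq_nonneg (2 * (1 - a - b) - (0))]
  · nlinarith [sq_nonneg (2 * a - (-1)), sq_nonneg (2 * b - (8/3)), sq_nonneg (2 * (1 - a - b) - (1/3))]
  · nlinarith [sq_nonneg (2 * a - (-2/3)), sq_nonneg (2 * b - (2)), sq_nonneg (2 * (1 - a - b) - (2/3))]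
  · nlinarith [sq_nonneg (2 * a - (-1)), sq_nonneg (2 * b - (7/3)), sq_nonneg (2 * (1 - a - b) - (2/3))]
  · nlinarith [sq_nonneg (2 * a - (-1)), sq_nonneg (2 * b - (2)), sq_nonneg (2 * (1 - a - b) - (1))]

def tw (i : Fin 3) (t : Fin 3 → ℝ) : Fin 3 → ℝ := fun j => 3 * t j - 2 * kd i j

lemma tw_sum (i : Fin 3) (t : Fin 3 → ℝ) (ht : ∑ j, t j = 1) : ∑ j, tw i t j = 1 := by
  simp only [tw, Fin.sum_univ_three] at ht ⊢
  fin_cases i <;> simp [kd] <;> linarith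

lemma ex3 (i i' k : Fin 3) (hi : i ≠ i') (hk : k ≠ i) (hk' : k ≠ i') (p : Fin 3 → Prop)
    (h : ∃ v, p v) : p i ∨ p i' ∨ p k := by
  obtain ⟨v, hv⟩ := h
  have : v = i ∨ v = i' ∨ v = k := by omega
  rcases this with rfl | rfl | rfl <;> tauto

lemma sum3 (i i' k : Fin 3) (hi : i ≠ i') (hk : k ≠ i) (hk' : k ≠ i') (f : Fin 3 → ℝ) :
    ∑ j, f j = f i + f i' + f k := by
  fin_cases i <;> fin_cases i' <;> fin_cases k <;> simp at hi hk hk' <;>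
    simp [Fin.sum_univ_three] <;> ring

lemma lens_all (t : Fin 3 → ℝ) (ht : ∑ j, t j = 1) (i i' : Fin 3) (hne : i ≠ i')
    (h1 : ∃ v, 0 < tw i t v - 1 / 3 + Qf (tw i t))
    (h2 : ∃ v, 0 < tw i' t v - 1 / 3 + Qf (tw i' t)) :
    ∀ j k, Xij (tw i t) j k ≤ if j = i' ∧ k = i' then 1 / 3 else 0 := by
  obtain ⟨k, hk, hk'⟩ : ∃ k, k ≠ i ∧ k ≠ i' := by
    clear h1 h2; revert i i'; decide
  have e1 : tw i' t i = tw i t i + 2 := by simp [tw, kd, hne.symm]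
  have e2 : tw i' t i' = tw i t i' - 2 := by simp [tw, kd, hne]
  have e3 : tw i' t k = tw i t k := by simp [tw, kd, hk.symm, hk'.symm]
  have hs := tw_sum i t ht
  rw [sum3 i i' k hne hk hk'] at hs
  have hq : Qf (tw i t) = 2 / 27 - 1 / 2 * ((tw i t i - 1/3)^2 + (tw i t i' - 1/3)^2
      + (tw i t k - 1/3)^2) := by
    rw [Qf, sum3 i i' k hne hk hk']
  have hq' : Qf (tw i' t) = 2 / 27 - 1 / 2 * ((tw i t i + 2 - 1/3)^2 + (tw i t i' - 2 - 1/3)^2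
      + (tw i t k - 1/3)^2) := by
    rw [Qf, sum3 i i' k hne hk hk', e1, e2, e3]
  have g1 := ex3 i i' k hne hk hk' _ h1
  have g2 := ex3 i i' k hne hk hk' _ h2
  rw [e1, e2, e3] at g2
  have hv := lens_vertex _ _ _ _ _ hs hq hq' g1 g2
  obtain ⟨c1, c2, c3, c4, c5, c6, c7, c8, c9⟩ := lens_core _ _ _ _ _ hs hq hq' hv
  intro j l
  have hj : j = i ∨ j = i' ∨ j = k := by omega
  have hl : l = i ∨ l = i' ∨ l = k := by omega
  unfold Xij
  rcases hj with rfl | rfl | rfl <;> rcases hl with rfl | rfl | rfl <;>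
    simp only [hne, hk', and_self, and_true, and_false, if_true, if_false] <;>
    assumption

lemma U1_lens (t : Fin 3 → ℝ) (ht : ∑ j, t j = 1) (i i' : Fin 3) (hne : i ≠ i')
    (h1 : ∃ v, 0 < tw i t v - 1 / 3 + Qf (tw i t))
    (h2 : ∃ v, 0 < tw i' t v - 1 / 3 + Qf (tw i' t)) : U1 (tw i t) ≤ 1 / 27 := by
  have h := lens_all t ht i i' hne h1 h2
  have hm : ∀ j k, max (Xij (tw i t) j k) 0 ≤ if j = i' ∧ k = i' then (1 / 3 : ℝ) else 0 := by
    intro j k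
    refine max_le (h j k) ?_
    split_ifs <;> norm_num
  have hs : ∑ j, ∑ k, max (Xij (tw i t) j k) 0
      ≤ ∑ j : Fin 3, ∑ k : Fin 3, if j = i' ∧ k = i' then (1 / 3 : ℝ) else 0 :=
    Finset.sum_le_sum fun j _ => Finset.sum_le_sum fun k _ => hm j k
  have he : ∑ j : Fin 3, ∑ k : Fin 3, (if j = i' ∧ k = i' then (1 / 3 : ℝ) else 0) = 1 / 3 := by
    simp [ite_and]
  unfold U1
  linarith

/-! ### Words -/

def twW : (k : ℕ) → (Fin k → Fin 3) → (Fin 3 → ℝ) → (Fin 3 → ℝ)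
  | 0, _, t => t
  | k + 1, ω, t => twW k (Fin.tail ω) (tw (ω 0) t)

def KK (P : Measure E2) (k : ℕ) (t : Fin 3 → ℝ) : ℝ := ∑ ω : Fin k → Fin 3, Gf P (twW k ω t)

lemma sum_words {M : Type*} [AddCommMonoid M] (k : ℕ) (f : (Fin (k + 1) → Fin 3) → M) :
    ∑ ω, f ω = ∑ i, ∑ ω, f (Fin.cons i ω) := by
  rw [← Fintype.sum_prod_type']
  exact (Fintype.sum_equiv (Fin.consEquiv fun _ => Fin 3) _ _ (fun _ => rfl)).symm

lemma KK_zero (P : Measure E2) (t : Fin 3 → ℝ) : KK P 0 t = Gf P t := by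
  simp [KK, twW]

lemma KK_succ (P : Measure E2) (k : ℕ) (t : Fin 3 → ℝ) :
    KK P (k + 1) t = ∑ i, KK P k (tw i t) := by
  simp only [KK, sum_words, twW, Fin.tail_cons, Fin.cons_zero]

lemma KK_nonneg (P : Measure E2) (k : ℕ) (t : Fin 3 → ℝ) : 0 ≤ KK P k t :=
  Finset.sum_nonneg fun _ _ => Gf_nonneg _ _

/-- A sum of three nonnegative terms, at most one of which is nonzero. -/
lemma sum_le_of_unique (f : Fin 3 → ℝ) (B : ℝ) (hB : 0 ≤ B) (hle : ∀ i, f i ≤ B)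
    (huni : ∀ i i', i ≠ i' → f i ≠ 0 → f i' = 0) : ∑ i, f i ≤ B := by
  by_cases h : ∃ i, f i ≠ 0
  · obtain ⟨i, hi⟩ := h
    rw [Finset.sum_eq_single i (fun j _ hj => huni i j (Ne.symm hj) hi) (by simp)]
    exact hle i
  · push Not at h
    simpa [h] using hB

lemma SS.KK_one {P : Measure E2} [IsProbabilityMeasure P] (hP : SS P) (t : Fin 3 → ℝ)
    (ht : ∑ j, t j = 1) : ∑ i, Gf P (tw i t) ≤ 2 / 27 := by
  by_cases h : ∃ i i', i ≠ i' ∧ Gf P (tw i t) ≠ 0 ∧ Gf P (tw i' t) ≠ 0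
  · obtain ⟨i, i', hne, h1, h2⟩ := h
    obtain ⟨k, hk, hk'⟩ : ∃ k, k ≠ i ∧ k ≠ i' := by
      clear h1 h2; revert i i'; decide
    have p1 := hP.Gf_pos _ h1
    have p2 := hP.Gf_pos _ h2
    have b1 := (hP.Gf_le_U1 _).trans (U1_lens t ht i i' hne p1 p2)
    have b2 := (hP.Gf_le_U1 _).trans (U1_lens t ht i' i hne.symm p2 p1)
    have b3 : Gf P (tw k t) = 0 := by
      by_contra h3
      have p3 := hP.Gf_pos _ h3
      have s : ∀ j, (∃ v, 0 < tw j t v - 1 / 3 + Qf (tw j t)) → -1 < tw j t j := by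
        rintro j ⟨v, hv⟩
        exact supp_vertex _ (tw_sum j t ht) v hv j
      have s1 := s i p1
      have s2 := s i' p2
      have s3 := s k p3
      simp only [tw, kd, if_true] at s1 s2 s3
      rw [sum3 i i' k hne hk hk'] at ht
      linarith
    rw [sum3 i i' k hne hk hk', b3]
    linarith
  · push Not at h
    exact sum_le_of_unique _ _ (by norm_num) (fun i => hP.Gf_le _ (tw_sum i t ht))
      (fun i i' hne hi => h i i' hne hi)

lemma SS.KK_main {P : Measure E2} [IsProbabilityMeasure P] (hP : SS P) (k : ℕ) :
    ∀ t : Fin 3 → ℝ, ∑ j, t j = 1 →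
      KK P (k + 1) t ≤ 2 / 27 ∧ (KK P (k + 1) t ≠ 0 → ∀ j, -(1 / 3) < t j) := by
  have kdn : ∀ i j, 0 ≤ kd i j := by intro i j; unfold kd; split_ifs <;> norm_num
  induction k with
  | zero =>
    intro t ht
    rw [KK_succ]
    simp only [KK_zero]
    refine ⟨hP.KK_one t ht, fun hne j => ?_⟩
    obtain ⟨i, _, hi⟩ := Finset.exists_ne_zero_of_sum_ne_zero hne
    obtain ⟨v, hv⟩ := hP.Gf_pos _ hi
    have := supp_vertex _ (tw_sum i t ht) v hv j
    have := kdn i j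
    simp only [tw] at *
    linarith
  | succ k ih =>
    intro t ht
    rw [KK_succ]
    have hs := fun i => tw_sum i t ht
    refine ⟨sum_le_of_unique _ _ (by norm_num) (fun i => (ih _ (hs i)).1) ?_, fun hne j => ?_⟩
    · intro i i' hne hi
      by_contra hi'
      obtain ⟨l, hl, hl'⟩ : ∃ l, l ≠ i ∧ l ≠ i' := by
        clear hi hi'; revert i i'; decide
      have s1 := (ih _ (hs i)).2 hi i
      have s2 := (ih _ (hs i')).2 hi' i'
      have s3 := (ih _ (hs i)).2 hi l
      simp only [tw, kd, if_true, hl.symm, if_false] at s1 s2 s3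
      rw [sum3 i i' l hne hl hl'] at ht
      linarith
    · obtain ⟨i, _, hi⟩ := Finset.exists_ne_zero_of_sum_ne_zero hne
      have := (ih _ (hs i)).2 hi j
      have := kdn i j
      simp only [tw] at *
      linarith

lemma Sword_zero (ω : Fin 0 → Fin 3) (x : E2) : Sword ω x = x := by
  simp [Sword]

lemma Sword_succ {k : ℕ} (ω : Fin (k + 1) → Fin 3) (x : E2) :
    Sword ω x = Smap (ω 0) (Sword (Fin.tail ω) x) := by
  simp [Sword, List.ofFn_succ, Fin.tail]

lemma twW_sum (k : ℕ) : ∀ (ω : Fin k → Fin 3) (t : Fin 3 → ℝ), ∑ j, t j = 1 →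
    ∑ j, twW k ω t j = 1 := by
  induction k with
  | zero => intro ω t ht; exact ht
  | succ k ih => intro ω t ht; exact ih _ _ (tw_sum _ _ ht)

lemma lam_Sword (k : ℕ) : ∀ (ω : Fin k → Fin 3) (t : Fin 3 → ℝ) (x : E2) (j : Fin 3),
    lam (Sword ω x) j - t j = ((3 : ℝ) ^ k)⁻¹ * (lam x j - twW k ω t j) := by
  induction k with
  | zero => intro ω t x j; simp [Sword_zero, twW]
  | succ k ih =>
    intro ω t x j
    rw [Sword_succ, lam_Smap]
    have h := ih (Fin.tail ω) (tw (ω 0) t) x j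
    rw [pow_succ, mul_inv, twW]
    have e : lam (Sword (Fin.tail ω) x) j
        = tw (ω 0) t j + ((3 : ℝ) ^ k)⁻¹ * (lam x j - twW k (Fin.tail ω) (tw (ω 0) t) j) := by
      linarith
    rw [e]
    simp only [tw]
    ring

lemma norm_Sword (k : ℕ) (ω : Fin k → Fin 3) (x a : E2) :
    ‖Sword ω x - a‖ ^ 2
      = ((9 : ℝ) ^ k)⁻¹ * (1 / 2 * ∑ j, (lam x j - twW k ω (lam a) j) ^ 2) := by
  rw [norm_lam]
  simp only [lam_Sword k ω (lam a) x, mul_pow]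
  rw [← Finset.mul_sum, inv_pow, ← pow_mul, mul_comm k 2, pow_mul]
  norm_num
  ring

lemma norm_Sword_sub (k : ℕ) (ω : Fin k → Fin 3) (x b : E2) :
    ‖Sword ω x - Sword ω b‖ ^ 2 = ((9 : ℝ) ^ k)⁻¹ * ‖x - b‖ ^ 2 := by
  rw [norm_lam, norm_lam]
  have h : ∀ j, lam (Sword ω x) j - lam (Sword ω b) j
      = ((3 : ℝ) ^ k)⁻¹ * (lam x j - lam b j) := by
    intro j
    have h1 := lam_Sword k ω 0 x j
    have h2 := lam_Sword k ω 0 b j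
    simp only [Pi.zero_apply] at h1 h2
    linarith
  simp only [h, mul_pow]
  rw [← Finset.mul_sum, inv_pow, ← pow_mul, mul_comm k 2, pow_mul]
  norm_num
  ring

lemma SS.lintegral_words {P : Measure E2} (hP : SS P) (k : ℕ) :
    ∀ {f : E2 → ℝ≥0∞}, Measurable f →
    ∫⁻ x, f x ∂P = ((3 : ℝ≥0∞) ^ k)⁻¹ * ∑ ω : Fin k → Fin 3, ∫⁻ x, f (Sword ω x) ∂P := by
  induction k with
  | zero => intro f hf; simp [Sword_zero]
  | succ k ih =>
    intro f hf
    rw [hP.lintegral hf, sum_words]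
    have : ∀ i, ∫⁻ x, f (Smap i x) ∂P = ((3 : ℝ≥0∞) ^ k)⁻¹ *
        ∑ ω : Fin k → Fin 3, ∫⁻ x, f (Smap i (Sword ω x)) ∂P := fun i =>
      ih (f := fun x => f (Smap i x)) (hf.comp (continuous_Smap i).measurable)
    simp only [this, Sword_succ, Fin.cons_zero, Fin.tail_cons]
    rw [← Finset.mul_sum, ← mul_assoc]
    congr 1
    rw [pow_succ, mul_comm (3⁻¹ : ℝ≥0∞), ENNReal.mul_inv (by simp) (by simp)]

lemma measurable_minDist (α : Set E2) (hα : α.Finite) :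
    Measurable fun x : E2 => ⨅ a ∈ α, ENNReal.ofReal (‖x - a‖ ^ 2) := by
  refine Measurable.biInf _ hα.countable fun a _ => ?_
  exact (by fun_prop : Continuous fun x : E2 => ‖x - a‖ ^ 2).measurable.ennreal_ofReal

lemma dist_Xf (l t : Fin 3 → ℝ) (ht : ∑ j, t j = 1) :
    1 / 2 * ∑ j, (l j - t j) ^ 2 = 1 / 2 * ∑ j, (l j - 1 / 3) ^ 2 + 2 / 27 - Xf l t := by
  simp only [Xf, Qf, Fin.sum_univ_three] at ht ⊢
  linear_combination (1 / 3) * ht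

lemma ofReal_integral_le {P : Measure E2} {f : E2 → ℝ} (hf : Integrable f P) :
    ENNReal.ofReal (∫ x, f x ∂P) ≤ ∫⁻ x, ENNReal.ofReal (f x) ∂P := by
  have h := ofReal_integral_eq_lintegral_ofReal hf.pos_part
    (Filter.Eventually.of_forall fun x => le_max_right _ _)
  calc ENNReal.ofReal (∫ x, f x ∂P) ≤ ENNReal.ofReal (∫ x, max (f x) 0 ∂P) :=
        ENNReal.ofReal_le_ofReal (integral_mono hf hf.pos_part fun x => le_max_left _ _)
    _ = ∫⁻ x, ENNReal.ofReal (max (f x) 0) ∂P := h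
    _ = ∫⁻ x, ENNReal.ofReal (f x) ∂P := by
        refine lintegral_congr fun x => ?_
        rcases le_total (f x) 0 with h0 | h0
        · simp [h0]
        · simp [h0]

lemma ofReal_sum_le' {ι : Type*} (s : Finset ι) (f : ι → ℝ) :
    ENNReal.ofReal (∑ i ∈ s, f i) ≤ ∑ i ∈ s, ENNReal.ofReal (f i) :=
  Finset.le_sum_of_subadditive _ ENNReal.ofReal_zero.le (fun _ _ => ENNReal.ofReal_add_le) s f

lemma SS.cell_lower {P : Measure E2} [IsProbabilityMeasure P] (hP : SS P) (k : ℕ)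
    (ω : Fin k → Fin 3) (A : Finset E2) :
    ENNReal.ofReal (((9 : ℝ) ^ k)⁻¹ * (13 / 54 - ∑ a ∈ A, Gf P (twW k ω (lam a))))
      ≤ ∫⁻ x, ⨅ a ∈ (A : Set E2), ENNReal.ofReal (‖Sword ω x - a‖ ^ 2) ∂P := by
  have iD : Integrable (fun x => 1 / 2 * ∑ j, (lam x j - 1 / 3) ^ 2 + 2 / 27) P :=
    hP.integrable (f := fun y => 1 / 2 * ∑ j, (y j - 1 / 3) ^ 2 + 2 / 27) (by fun_prop)
  have iG : ∀ t, Integrable (fun x => max (Xf (lam x) t) 0) P := fun t =>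
    hP.integrable (continuous_Xf t)
  have iS : Integrable (fun x => ∑ a ∈ A, max (Xf (lam x) (twW k ω (lam a))) 0) P :=
    integrable_finsetSum _ fun a _ => iG _
  have vD : ∫ x, (1 / 2 * ∑ j, (lam x j - 1 / 3) ^ 2 + 2 / 27) ∂P = 13 / 54 := by
    have hj : ∀ j, ∫ x, (lam x j - 1 / 3) ^ 2 ∂P = 1 / 9 := by
      intro j
      have := hP.int_sq j 1 (-(1 / 3))
      simp only [one_mul, ← sub_eq_add_neg] at this
      rw [this]; norm_num
    have hi : ∀ j, Integrable (fun x => (lam x j - 1 / 3) ^ 2) P := fun j =>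
      hP.integrable (f := fun y => (y j - 1 / 3) ^ 2) (by fun_prop)
    have hi' : Integrable (fun x => 1 / 2 * ∑ j, (lam x j - 1 / 3) ^ 2) P :=
      (integrable_finsetSum _ fun j _ => hi j).const_mul _
    rw [integral_add hi' (integrable_const _), integral_const_mul,
      integral_finsetSum _ fun j _ => hi j]
    simp only [hj]
    simp
    norm_num
  have hv : ∫ x, ((9 : ℝ) ^ k)⁻¹ * ((1 / 2 * ∑ j, (lam x j - 1 / 3) ^ 2 + 2 / 27)
      - ∑ a ∈ A, max (Xf (lam x) (twW k ω (lam a))) 0) ∂P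
      = ((9 : ℝ) ^ k)⁻¹ * (13 / 54 - ∑ a ∈ A, Gf P (twW k ω (lam a))) := by
    rw [integral_const_mul, integral_sub iD iS, vD, integral_finsetSum _ fun a _ => iG _]
    rfl
  rw [← hv]
  refine (ofReal_integral_le ((iD.sub iS).const_mul _)).trans (lintegral_mono fun x => ?_)
  refine le_iInf₂ fun a ha => ENNReal.ofReal_le_ofReal ?_
  rw [norm_Sword, dist_Xf _ _ (twW_sum k ω _ (lam_sum a))]
  refine mul_le_mul_of_nonneg_left ?_ (by positivity)
  have h1 : max (Xf (lam x) (twW k ω (lam a))) 0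
      ≤ ∑ a ∈ A, max (Xf (lam x) (twW k ω (lam a))) 0 :=
    Finset.single_le_sum (f := fun a => max (Xf (lam x) (twW k ω (lam a))) 0)
      (fun _ _ => le_max_right _ _) ha
  have h2 := le_max_left (Xf (lam x) (twW k ω (lam a))) 0
  simp only [Pi.sub_apply]
  linarith

lemma inv_pow_ofReal (k : ℕ) : ((3 : ℝ≥0∞) ^ k)⁻¹ = ENNReal.ofReal (((3 : ℝ) ^ k)⁻¹) := by
  rw [ENNReal.ofReal_inv_of_pos (by positivity), ENNReal.ofReal_pow (by norm_num)]
  norm_num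

lemma SS.lower {P : Measure E2} [IsProbabilityMeasure P] (hP : SS P) (k n : ℕ) (hk : 1 ≤ k)
    (A : Finset E2) (hA : A.card ≤ n) :
    ENNReal.ofReal (((3 : ℝ) ^ k)⁻¹ * (((9 : ℝ) ^ k)⁻¹ * (3 ^ k * (13 / 54) - n * (2 / 27))))
      ≤ err P A := by
  unfold err
  rw [hP.lintegral_words k (measurable_minDist _ A.finite_toSet), inv_pow_ofReal,
    ENNReal.ofReal_mul (by positivity)]
  refine mul_le_mul_right ?_ _
  refine le_trans ?_ (Finset.sum_le_sum fun ω _ => hP.cell_lower k ω A)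
  refine le_trans (ENNReal.ofReal_le_ofReal ?_) (ofReal_sum_le' _ _)
  rw [← Finset.mul_sum, Finset.sum_sub_distrib]
  refine mul_le_mul_of_nonneg_left ?_ (by positivity)
  rw [Finset.sum_comm]
  have h1 : ∑ a ∈ A, ∑ ω, Gf P (twW k ω (lam a)) ≤ ∑ _a ∈ A, (2 / 27 : ℝ) := by
    refine Finset.sum_le_sum fun a _ => ?_
    obtain ⟨m, rfl⟩ : ∃ m, k = m + 1 := ⟨k - 1, by omega⟩
    exact (hP.KK_main m (lam a) (lam_sum a)).1
  have h2 : (A.card : ℝ) ≤ n := by exact_mod_cast hA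
  simp only [Finset.sum_const, Finset.card_univ, Fintype.card_fun, Fintype.card_fin,
    nsmul_eq_mul] at h1 ⊢
  push_cast
  linarith

/-! ### Upper bounds -/

lemma SS.lintegral_cell {P : Measure E2} [IsProbabilityMeasure P] (hP : SS P) (i : Fin 3)
    (a : E2) : ∫⁻ x, ENNReal.ofReal (‖Smap i x - a‖ ^ 2) ∂P
      = ENNReal.ofReal (1 / 2 * ∑ j, (2 / 81 + 2 / 9 * (2 / 3 * kd i j - lam a j)
          + (2 / 3 * kd i j - lam a j) ^ 2)) := by
  have hn : ∀ x, ‖Smap i x - a‖ ^ 2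
      = 1 / 2 * ∑ j, (1 / 3 * lam x j + (2 / 3 * kd i j - lam a j)) ^ 2 := by
    intro x
    rw [norm_lam]
    congr 1
    refine Finset.sum_congr rfl fun j _ => ?_
    rw [lam_Smap]; ring
  have hi : ∀ j, Integrable (fun x => (1 / 3 * lam x j + (2 / 3 * kd i j - lam a j)) ^ 2) P :=
    fun j => hP.integrable (f := fun y => (1 / 3 * y j + (2 / 3 * kd i j - lam a j)) ^ 2)
      (by fun_prop)
  rw [← ofReal_integral_eq_lintegral_ofReal]
  · simp only [hn]
    rw [integral_const_mul, integral_finsetSum _ fun j _ => hi j]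
    congr 2
    refine Finset.sum_congr rfl fun j _ => ?_
    rw [hP.int_sq]; ring
  · simp only [hn]
    exact (integrable_finsetSum _ fun j _ => hi j).const_mul _
  · exact Filter.Eventually.of_forall fun x => by positivity

/-- Upper bound for the error by assigning a point to each first level cell. -/
lemma SS.err_le {P : Measure E2} [IsProbabilityMeasure P] (hP : SS P) (α : Set E2)
    (hα : α.Finite) (p : Fin 3 → E2) (hp : ∀ i, p i ∈ α) :
    err P α ≤ 3⁻¹ * ∑ i, ENNReal.ofReal (1 / 2 * ∑ j, (2 / 81
      + 2 / 9 * (2 / 3 * kd i j - lam (p i) j) + (2 / 3 * kd i j - lam (p i) j) ^ 2)) := by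
  unfold err
  rw [hP.lintegral (measurable_minDist _ hα)]
  refine mul_le_mul_right (Finset.sum_le_sum fun i _ => ?_) _
  rw [← hP.lintegral_cell]
  exact lintegral_mono fun x => iInf₂_le (p i) (hp i)

lemma ncard_two_le (u v : E2) : ({u, v} : Set E2).ncard ≤ 2 := by
  refine (Set.ncard_insert_le _ _).trans ?_
  rw [Set.ncard_singleton]

lemma lam_c (j : Fin 3) : lam (pt (1/2) (Real.sqrt 3 / 6)) j = 1 / 3 := by
  have h := sqrt3_pos.ne'
  fin_cases j <;> simp [lam, pt] <;> field_simp <;> norm_num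

lemma inv3_ofReal : (3⁻¹ : ℝ≥0∞) = ENNReal.ofReal (1 / 3) := by
  have := inv_pow_ofReal 1
  rw [pow_one, pow_one] at this
  rw [this, one_div]

lemma SS.err_three {P : Measure E2} [IsProbabilityMeasure P] (hP : SS P) :
    err P ({S1 (pt (1/2) (Real.sqrt 3 / 6)),
          S2 (pt (1/2) (Real.sqrt 3 / 6)), S3 (pt (1/2) (Real.sqrt 3 / 6))} : Set E2)
      ≤ ENNReal.ofReal (1 / 54) := by
  refine (hP.err_le _ (by simp) (fun i => Smap i (pt (1/2) (Real.sqrt 3 / 6))) ?_).trans ?_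
  · intro i; fin_cases i <;> simp [Smap]
  · simp only [lam_Smap, lam_c]
    rw [inv3_ofReal, ← ENNReal.ofReal_sum_of_nonneg, ← ENNReal.ofReal_mul (by norm_num)]
    · refine ENNReal.ofReal_le_ofReal ?_
      simp only [Fin.sum_univ_three]
      norm_num
    · intro i _
      simp only [Fin.sum_univ_three]
      norm_num

lemma lam_pt (a b c : ℝ) (h : a + b + c = 1) :
    lam (pt (b + c / 2) (Real.sqrt 3 * c / 2)) = ![a, b, c] := by
  have h3 := sqrt3_pos.ne'
  obtain rfl : a = 1 - b - c := by linarith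
  ext j
  fin_cases j <;> simp [lam, pt] <;> field_simp <;> ring

lemma SS.quant_two {P : Measure E2} [IsProbabilityMeasure P] (hP : SS P) :
    quantErr P 2 ≤ ENNReal.ofReal (5 / 54) := by
  obtain ⟨u, hu⟩ : ∃ u, lam u = ![4 / 9, 4 / 9, 1 / 9] := ⟨_, lam_pt _ _ _ (by norm_num)⟩
  obtain ⟨v, hv⟩ : ∃ v, lam v = ![1 / 9, 1 / 9, 7 / 9] := ⟨_, lam_pt _ _ _ (by norm_num)⟩
  refine (iInf₂_le ({u, v} : Set E2) ⟨by simp, ncard_two_le u v⟩).trans ?_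
  refine (hP.err_le _ (by simp) ![u, u, v] ?_).trans ?_
  · intro i; fin_cases i <;> simp
  · rw [inv3_ofReal, ← ENNReal.ofReal_sum_of_nonneg, ← ENNReal.ofReal_mul (by norm_num)]
    · refine ENNReal.ofReal_le_ofReal ?_
      simp [Fin.sum_univ_three, hu, hv, kd]
      norm_num
    · intro i _
      fin_cases i <;> simp [Fin.sum_univ_three, hu, hv, kd] <;> norm_num

lemma SS.cell_upper {P : Measure E2} [IsProbabilityMeasure P] (k : ℕ)
    (ω : Fin k → Fin 3) (α β : Set E2) (h : Sword ω '' β ⊆ α) (B : ℝ)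
    (hB : err P β ≤ ENNReal.ofReal B) :
    ∫⁻ x, ⨅ a ∈ α, ENNReal.ofReal (‖Sword ω x - a‖ ^ 2) ∂P
      ≤ ENNReal.ofReal (((9 : ℝ) ^ k)⁻¹ * B) := by
  rw [ENNReal.ofReal_mul (by positivity)]
  refine le_trans ?_ (mul_le_mul_right hB _)
  unfold err
  rw [← lintegral_const_mul' _ _ ENNReal.ofReal_ne_top]
  refine lintegral_mono fun x => ?_
  have h9 : ENNReal.ofReal (((9 : ℝ) ^ k)⁻¹) ≠ 0 := by
    rw [Ne, ENNReal.ofReal_eq_zero, not_le]; positivity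
  simp only [ENNReal.mul_iInf_of_ne h9 ENNReal.ofReal_ne_top]
  refine le_iInf₂ fun b hb => ?_
  refine (iInf₂_le (Sword ω b) (h ⟨b, hb, rfl⟩)).trans (le_of_eq ?_)
  rw [norm_Sword_sub, ENNReal.ofReal_mul (by positivity)]

lemma biUnion_card {k : ℕ} (J : Set (Fin k → Fin 3)) (β : Set E2) (hβ : β.Finite) (m : ℕ)
    (hm : β.ncard ≤ m) :
    (⋃ ω ∈ J, Sword ω '' β).Finite ∧ (⋃ ω ∈ J, Sword ω '' β).ncard ≤ J.ncard * m := by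
  classical
  have hJ : J.Finite := Set.toFinite J
  lift J to Finset (Fin k → Fin 3) using hJ
  lift β to Finset E2 using hβ
  have e : (⋃ ω ∈ (J : Set (Fin k → Fin 3)), Sword ω '' (β : Set E2))
      = ((J.biUnion fun ω => β.image (Sword ω) : Finset E2) : Set E2) := by
    simp
  rw [e, Set.ncard_coe_finset, Set.ncard_coe_finset]
  rw [Set.ncard_coe_finset] at hm
  exact ⟨Finset.finite_toSet _, Finset.card_biUnion_le_card_mul _ _ _ fun ω _ =>
    Finset.card_image_le.trans hm⟩

/-- For ℓ ≥ 1 and 2·3^ℓ < n < 3^{ℓ+1}, any optimal set of two-means α₂, and any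
J ⊆ {1,2,3}^ℓ with card J = n − 2·3^ℓ, the set
⋃_{ω ∈ J} S_ω(α₃) ∪ ⋃_{ω ∉ J} S_ω(α₂) is an optimal set of n-means for the R-measure P,
where c = (1/2, √3/6) and α₃ = {S₁(c), S₂(c), S₃(c)}. -/
theorem stmt_15 (P : Measure E2) [IsProbabilityMeasure P]
    (hP : P = (3 : ℝ≥0∞)⁻¹ • (P.map S1 + P.map S2 + P.map S3))
    (ℓ n : ℕ) (hℓ : 1 ≤ ℓ) (h1 : 2 * 3 ^ ℓ < n) (h2 : n < 3 ^ (ℓ + 1))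
    (α₂ : Set E2) (hα₂ : IsOptimal P 2 α₂)
    (J : Set (Fin ℓ → Fin 3)) (hJ : J.ncard = n - 2 * 3 ^ ℓ) :
    IsOptimal P n
      ((⋃ ω ∈ J, Sword ω '' ({S1 (pt (1/2) (Real.sqrt 3 / 6)),
          S2 (pt (1/2) (Real.sqrt 3 / 6)), S3 (pt (1/2) (Real.sqrt 3 / 6))} : Set E2))
        ∪ ⋃ ω ∈ Jᶜ, Sword ω '' α₂) := by
  have hS : SS P := hP
  set β₃ : Set E2 := {S1 (pt (1/2) (Real.sqrt 3 / 6)),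
          S2 (pt (1/2) (Real.sqrt 3 / 6)), S3 (pt (1/2) (Real.sqrt 3 / 6))} with hβ₃
  set γ : Set E2 := (⋃ ω ∈ J, Sword ω '' β₃) ∪ ⋃ ω ∈ Jᶜ, Sword ω '' α₂ with hγ
  obtain ⟨hf2, hc2, he2⟩ := hα₂
  have hf3 : β₃.Finite := by simp [hβ₃]
  have hc3 : β₃.ncard ≤ 3 := by
    rw [hβ₃]
    refine (Set.ncard_insert_le _ _).trans ?_
    have := ncard_two_le (S2 (pt (1/2) (Real.sqrt 3 / 6))) (S3 (pt (1/2) (Real.sqrt 3 / 6)))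
    omega
  obtain ⟨f1, c1⟩ := biUnion_card J β₃ hf3 3 hc3
  obtain ⟨f2, c2⟩ := biUnion_card Jᶜ α₂ hf2 2 hc2
  have hcard : J.ncard + Jᶜ.ncard = 3 ^ ℓ := by
    rw [Set.ncard_add_ncard_compl]
    simp
  have hγf : γ.Finite := f1.union f2
  have hγc : γ.ncard ≤ n := by
    have := Set.ncard_union_le (⋃ ω ∈ J, Sword ω '' β₃) (⋃ ω ∈ Jᶜ, Sword ω '' α₂)
    rw [← hγ] at this
    omega
  refine ⟨hγf, hγc, le_antisymm ?_ (iInf₂_le γ ⟨hγf, hγc⟩)⟩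
  have hlow : ENNReal.ofReal (((3 : ℝ) ^ ℓ)⁻¹ * (((9 : ℝ) ^ ℓ)⁻¹ *
      (3 ^ ℓ * (13 / 54) - n * (2 / 27)))) ≤ quantErr P n := by
    refine le_iInf₂ fun α hα => ?_
    obtain ⟨hαf, hαc⟩ := hα
    lift α to Finset E2 using hαf
    rw [Set.ncard_coe_finset] at hαc
    exact hS.lower ℓ n hℓ α hαc
  refine le_trans ?_ hlow
  classical
  have hcell : ∀ ω : Fin ℓ → Fin 3,
      ∫⁻ x, ⨅ a ∈ γ, ENNReal.ofReal (‖Sword ω x - a‖ ^ 2) ∂P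
      ≤ ENNReal.ofReal (((9 : ℝ) ^ ℓ)⁻¹ * (if ω ∈ J then 1 / 54 else 5 / 54)) := by
    intro ω
    split_ifs with hω
    · refine SS.cell_upper ℓ ω γ β₃ ?_ _ hS.err_three
      exact (Set.subset_biUnion_of_mem (u := fun ω => Sword ω '' β₃) hω).trans
        Set.subset_union_left
    · refine SS.cell_upper ℓ ω γ α₂ ?_ _ (he2.le.trans hS.quant_two)
      have hω' : ω ∈ Jᶜ := hω
      exact (Set.subset_biUnion_of_mem (u := fun ω => Sword ω '' α₂) hω').trans
        Set.subset_union_right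
  unfold err
  rw [hS.lintegral_words ℓ (measurable_minDist _ hγf), inv_pow_ofReal,
    ENNReal.ofReal_mul (by positivity)]
  refine mul_le_mul_right ((Finset.sum_le_sum fun ω _ => hcell ω).trans ?_) _
  rw [← ENNReal.ofReal_sum_of_nonneg]
  · refine ENNReal.ofReal_le_ofReal ?_
    rw [← Finset.mul_sum]
    refine mul_le_mul_of_nonneg_left ?_ (by positivity)
    rw [Finset.sum_ite]
    have n1 : (Finset.univ.filter fun ω => ω ∈ J).card = J.ncard := by
      rw [Set.ncard_eq_toFinset_card']
      congr 1
      ext; simp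
    have n2 : (Finset.univ.filter fun ω => ω ∉ J).card = Jᶜ.ncard := by
      rw [Set.ncard_eq_toFinset_card']
      congr 1
      ext; simp
    simp only [Finset.sum_const, nsmul_eq_mul, n1, n2]
    have r1 : (J.ncard : ℝ) + Jᶜ.ncard = 3 ^ ℓ := by exact_mod_cast hcard
    have r2 : (J.ncard : ℝ) + 2 * 3 ^ ℓ = n := by
      have : J.ncard + 2 * 3 ^ ℓ = n := by omega
      exact_mod_cast this
    linarith
  · intro ω _
    split_ifs <;> positivity

end
end

section
/- Let P be the R-measure. For every n ≥ 3, letting ℓ(n) be the unique natural number with 3^{ℓ(n)} ≤ n < 3^{ℓ(n)+1}, the n-th quantization error of P is V_n(P) = (1/2) · (1/27^{ℓ(n)+1}) · (13·3^{ℓ(n)} − 4n). -/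
open MeasureTheory ENNReal

noncomputable section

/-! ### Pure real-number lemmas -/

/-- The charge function, in the coordinates `p, q`. -/
def chg (p q : ℝ) : ℝ :=
  open Classical in
  if |p| < 4/5 ∧ |q| < 4/5 ∧ |q - p| < 4/5 then 1
  else if |p| < 6/5 ∧ |q| < 6/5 ∧ |q - p| < 6/5 ∧ p + q < 2 ∧ q - 2 * p < 2 ∧ p - 2 * q < 2
    then 1/2 else 0

lemma chg_nonneg (p q : ℝ) : 0 ≤ chg p q := by
  unfold chg; split_ifs <;> norm_num

lemma chg_le_one (p q : ℝ) : chg p q ≤ 1 := by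
  unfold chg; split_ifs <;> norm_num

lemma chg_cases (p q : ℝ) :
    (chg p q = 1 ∧ |p| < 4/5 ∧ |q| < 4/5 ∧ |q - p| < 4/5) ∨
    (chg p q = 1/2 ∧ ¬ (|p| < 4/5 ∧ |q| < 4/5 ∧ |q - p| < 4/5) ∧
      |p| < 6/5 ∧ |q| < 6/5 ∧ |q - p| < 6/5 ∧ p + q < 2 ∧ q - 2 * p < 2 ∧ p - 2 * q < 2) ∨
    (chg p q = 0 ∧
      ¬ (|p| < 6/5 ∧ |q| < 6/5 ∧ |q - p| < 6/5 ∧ p + q < 2 ∧ q - 2 * p < 2 ∧ p - 2 * q < 2)) := by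
  unfold chg; split_ifs with h1 h2
  · exact Or.inl ⟨rfl, h1⟩
  · exact Or.inr (Or.inl ⟨rfl, h1, h2⟩)
  · exact Or.inr (Or.inr ⟨rfl, h2⟩)

lemma chg_pos {p q : ℝ} (h : chg p q ≠ 0) :
    (-6/5 < p ∧ p < 6/5) ∧ (-6/5 < q ∧ q < 6/5) ∧ (-6/5 < q - p ∧ q - p < 6/5) ∧
      p + q < 2 ∧ q - 2 * p < 2 ∧ p - 2 * q < 2 := by
  rcases chg_cases p q with ⟨_, h1, h2, h3⟩ | ⟨_, _, h1, h2, h3, h4⟩ | ⟨h0, _⟩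
  · rw [abs_lt] at h1 h2 h3
    refine ⟨⟨?_, ?_⟩, ⟨?_, ?_⟩, ⟨?_, ?_⟩, ?_, ?_, ?_⟩ <;> linarith [h1.1, h1.2, h2.1, h2.2, h3.1, h3.2]
  · rw [abs_lt] at h1 h2 h3
    refine ⟨⟨?_, ?_⟩, ⟨?_, ?_⟩, ⟨?_, ?_⟩, h4⟩ <;> linarith [h1.1, h1.2, h2.1, h2.2, h3.1, h3.2]
  · exact absurd h0 h

lemma chg_one {p q : ℝ} (h1 : |p| < 4/5) (h2 : |q| < 4/5) (h3 : |q - p| < 4/5) : chg p q = 1 := by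
  unfold chg; rw [if_pos ⟨h1, h2, h3⟩]

lemma chg_half {p q : ℝ} (h : 4/5 ≤ |p| ∨ 4/5 ≤ |q| ∨ 4/5 ≤ |q - p|) : chg p q ≤ 1/2 := by
  unfold chg; split_ifs with h1 h2
  · obtain ⟨a, b, c⟩ := h1
    rcases h with h | h | h <;> linarith
  · exact le_refl _
  · norm_num

/-- The charges of the three children do not exceed one. -/
lemma chg_sum_le_one (p q : ℝ) : chg p q + chg (p - 2) (q - 1) + chg (p - 1) (q - 2) ≤ 1 := by
  by_cases h1 : chg p q = 0
  · by_cases h2 : chg (p - 2) (q - 1) = 0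
    · rw [h1, h2]; linarith [chg_le_one (p - 1) (q - 2)]
    · by_cases h3 : chg (p - 1) (q - 2) = 0
      · rw [h1, h3]; linarith [chg_le_one (p - 2) (q - 1)]
      · obtain ⟨⟨a1, a2⟩, ⟨a3, a4⟩, ⟨a5, a6⟩, _⟩ := chg_pos h2
        obtain ⟨⟨b1, b2⟩, ⟨b3, b4⟩, ⟨b5, b6⟩, _⟩ := chg_pos h3
        have e2 : chg (p - 2) (q - 1) ≤ 1/2 :=
          chg_half (Or.inr (Or.inr (by rw [le_abs]; left; linarith)))
        have e3 : chg (p - 1) (q - 2) ≤ 1/2 :=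
          chg_half (Or.inr (Or.inr (by rw [le_abs]; right; linarith)))
        rw [h1]; linarith
  · obtain ⟨⟨a1, a2⟩, ⟨a3, a4⟩, ⟨a5, a6⟩, a7, a8, a9⟩ := chg_pos h1
    by_cases h2 : chg (p - 2) (q - 1) = 0
    · by_cases h3 : chg (p - 1) (q - 2) = 0
      · rw [h2, h3]; linarith [chg_le_one p q]
      · obtain ⟨⟨b1, b2⟩, ⟨b3, b4⟩, ⟨b5, b6⟩, _⟩ := chg_pos h3
        have e2 : chg p q ≤ 1/2 :=
          chg_half (Or.inr (Or.inl (by rw [le_abs]; left; linarith)))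
        have e3 : chg (p - 1) (q - 2) ≤ 1/2 :=
          chg_half (Or.inr (Or.inl (by rw [le_abs]; right; linarith)))
        rw [h2]; linarith
    · obtain ⟨⟨b1, b2⟩, ⟨b3, b4⟩, ⟨b5, b6⟩, b7, b8, b9⟩ := chg_pos h2
      by_cases h3 : chg (p - 1) (q - 2) = 0
      · have e2 : chg p q ≤ 1/2 := chg_half (Or.inl (by rw [le_abs]; left; linarith))
        have e3 : chg (p - 2) (q - 1) ≤ 1/2 := chg_half (Or.inl (by rw [le_abs]; right; linarith))
        rw [h3]; linarith
      · obtain ⟨⟨c1, c2⟩, ⟨c3, c4⟩, ⟨c5, c6⟩, c7, c8, c9⟩ := chg_pos h3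
        exfalso; linarith

/-- Super-additivity of the charge under the three maps. -/
lemma chg_super (p q : ℝ) :
    chg (3 * p + 1) (3 * q + 1) + chg (3 * p - 1) (3 * q) + chg (3 * p) (3 * q - 1) ≤ chg p q := by
  have hs := chg_sum_le_one (3 * p + 1) (3 * q + 1)
  rw [show 3 * p + 1 - 2 = 3 * p - 1 by ring, show 3 * q + 1 - 1 = 3 * q by ring,
    show 3 * p + 1 - 1 = 3 * p by ring, show 3 * q + 1 - 2 = 3 * q - 1 by ring] at hs
  by_cases h : |p| < 4/5 ∧ |q| < 4/5 ∧ |q - p| < 4/5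
  · rw [chg_one h.1 h.2.1 h.2.2]; exact hs
  · have z1 : chg (3 * p + 1) (3 * q + 1) = 0 := by
      by_contra hc
      obtain ⟨⟨a1, a2⟩, ⟨a3, a4⟩, ⟨a5, a6⟩, _⟩ := chg_pos hc
      exact h ⟨abs_lt.2 ⟨by linarith, by linarith⟩, abs_lt.2 ⟨by linarith, by linarith⟩,
        abs_lt.2 ⟨by linarith, by linarith⟩⟩
    have z2 : chg (3 * p - 1) (3 * q) = 0 := by
      by_contra hc
      obtain ⟨⟨a1, a2⟩, ⟨a3, a4⟩, ⟨a5, a6⟩, _⟩ := chg_pos hc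
      exact h ⟨abs_lt.2 ⟨by linarith, by linarith⟩, abs_lt.2 ⟨by linarith, by linarith⟩,
        abs_lt.2 ⟨by linarith, by linarith⟩⟩
    have z3 : chg (3 * p) (3 * q - 1) = 0 := by
      by_contra hc
      obtain ⟨⟨a1, a2⟩, ⟨a3, a4⟩, ⟨a5, a6⟩, _⟩ := chg_pos hc
      exact h ⟨abs_lt.2 ⟨by linarith, by linarith⟩, abs_lt.2 ⟨by linarith, by linarith⟩,
        abs_lt.2 ⟨by linarith, by linarith⟩⟩
    rw [z1, z2, z3]; linarith [chg_nonneg p q]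

/-- Squared length in the coordinates `p, q`. -/
def nq (p q : ℝ) : ℝ := 4/3 * (p ^ 2 - p * q + q ^ 2)

/-- `|a - v_i|² - |c - v_i|²` for the three corners `v_i`. -/
def Dv (p q : ℝ) : Fin 3 → ℝ :=
  ![nq p q + (2 * p + 2 * q) / 3, nq p q - (4 * p - 2 * q) / 3, nq p q - (4 * q - 2 * p) / 3]

set_option maxHeartbeats 1000000 in
lemma Dv_zero {p q : ℝ}
    (h : ¬ (|p| < 6/5 ∧ |q| < 6/5 ∧ |q - p| < 6/5 ∧ p + q < 2 ∧ q - 2 * p < 2 ∧ p - 2 * q < 2)) :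
    ∀ i, 2/27 ≤ Dv p q i := by
  have h' : 6/5 ≤ p ∨ p ≤ -6/5 ∨ 6/5 ≤ q ∨ q ≤ -6/5 ∨ 6/5 ≤ q - p ∨ q - p ≤ -6/5 ∨
      2 ≤ p + q ∨ 2 ≤ q - 2 * p ∨ 2 ≤ p - 2 * q := by
    by_contra hc
    push Not at hc
    obtain ⟨a, b, c, d, e, f, g⟩ := hc
    exact h ⟨abs_lt.2 ⟨by linarith, a⟩, abs_lt.2 ⟨by linarith, c⟩, abs_lt.2 ⟨by linarith, e⟩, g⟩
  intro i
  rcases h' with h | h | h | h | h | h | h | h | h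
  · fin_cases i <;> simp [Dv, nq] <;>
      nlinarith [sq_nonneg (2 * q - p), sq_nonneg (2 * q - p + 1/2), sq_nonneg (2 * q - p - 1/2), sq_nonneg (2 * q - p + 1), sq_nonneg (2 * q - p - 1)]
  · fin_cases i <;> simp [Dv, nq] <;>
      nlinarith [sq_nonneg (2 * q - p), sq_nonneg (2 * q - p + 1/2), sq_nonneg (2 * q - p - 1/2), sq_nonneg (2 * q - p + 1), sq_nonneg (2 * q - p - 1)]
  · fin_cases i <;> simp [Dv, nq] <;>
      nlinarith [sq_nonneg (2 * p - q), sq_nonneg (2 * p - q + 1/2), sq_nonneg (2 * p - q - 1/2), sq_nonneg (2 * p - q + 1), sq_nonneg (2 * p - q - 1)]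
  · fin_cases i <;> simp [Dv, nq] <;>
      nlinarith [sq_nonneg (2 * p - q), sq_nonneg (2 * p - q + 1/2), sq_nonneg (2 * p - q - 1/2), sq_nonneg (2 * p - q + 1), sq_nonneg (2 * p - q - 1)]
  · fin_cases i <;> simp [Dv, nq] <;>
      nlinarith [sq_nonneg (p + q), sq_nonneg (p + q + 1/2), sq_nonneg (p + q - 1/2), sq_nonneg (p + q + 1), sq_nonneg (p + q - 1)]
  · fin_cases i <;> simp [Dv, nq] <;>
      nlinarith [sq_nonneg (p + q), sq_nonneg (p + q + 1/2), sq_nonneg (p + q - 1/2), sq_nonneg (p + q + 1), sq_nonneg (p + q - 1)]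
  · fin_cases i <;> simp [Dv, nq] <;>
      nlinarith [sq_nonneg (q - p), sq_nonneg (q - p + 1/2), sq_nonneg (q - p - 1/2), sq_nonneg (q - p + 1), sq_nonneg (q - p - 1)]
  · fin_cases i <;> simp [Dv, nq] <;>
      nlinarith [sq_nonneg (q), sq_nonneg (q + 1/2), sq_nonneg (q - 1/2), sq_nonneg (q + 1), sq_nonneg (q - 1)]
  · fin_cases i <;> simp [Dv, nq] <;>
      nlinarith [sq_nonneg (p), sq_nonneg (p + 1/2), sq_nonneg (p - 1/2), sq_nonneg (p + 1), sq_nonneg (p - 1)]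

set_option maxHeartbeats 1000000 in
lemma Dv_half {p q : ℝ} (h : ¬ (|p| < 4/5 ∧ |q| < 4/5 ∧ |q - p| < 4/5)) :
    ∃ i, -7/27 ≤ Dv p q i ∧ ∀ j, j ≠ i → 2/27 ≤ Dv p q j ∧ 2/9 ≤ 2 * Dv p q i + Dv p q j := by
  have h' : 4/5 ≤ p ∨ p ≤ -4/5 ∨ 4/5 ≤ q ∨ q ≤ -4/5 ∨ 4/5 ≤ q - p ∨ q - p ≤ -4/5 := by
    by_contra hc
    push Not at hc
    obtain ⟨a, b, c, d, e, f⟩ := hc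
    exact h ⟨abs_lt.2 ⟨by linarith, a⟩, abs_lt.2 ⟨by linarith, c⟩, abs_lt.2 ⟨by linarith, e⟩⟩
  rcases h' with h | h | h | h | h | h
  · refine ⟨1, ?_, fun j hj => ?_⟩
    · simp [Dv, nq]
      nlinarith [sq_nonneg (2 * q - p), sq_nonneg (2 * q - p + 1/2), sq_nonneg (2 * q - p - 1/2), sq_nonneg (2 * q - p + 1), sq_nonneg (2 * q - p - 1)]
    · fin_cases j <;> simp [Dv, nq] at hj ⊢ <;> constructor <;>
        nlinarith [sq_nonneg (2 * q - p), sq_nonneg (2 * q - p + 1/2), sq_nonneg (2 * q - p - 1/2), sq_nonneg (2 * q - p + 1), sq_nonneg (2 * q - p - 1)]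
  · refine ⟨0, ?_, fun j hj => ?_⟩
    · simp [Dv, nq]
      nlinarith [sq_nonneg (2 * q - p), sq_nonneg (2 * q - p + 1/2), sq_nonneg (2 * q - p - 1/2), sq_nonneg (2 * q - p + 1), sq_nonneg (2 * q - p - 1)]
    · fin_cases j <;> simp [Dv, nq] at hj ⊢ <;> constructor <;>
        nlinarith [sq_nonneg (2 * q - p), sq_nonneg (2 * q - p + 1/2), sq_nonneg (2 * q - p - 1/2), sq_nonneg (2 * q - p + 1), sq_nonneg (2 * q - p - 1)]
  · refine ⟨2, ?_, fun j hj => ?_⟩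
    · simp [Dv, nq]
      nlinarith [sq_nonneg (2 * p - q), sq_nonneg (2 * p - q + 1/2), sq_nonneg (2 * p - q - 1/2), sq_nonneg (2 * p - q + 1), sq_nonneg (2 * p - q - 1)]
    · fin_cases j <;> simp [Dv, nq] at hj ⊢ <;> constructor <;>
        nlinarith [sq_nonneg (2 * p - q), sq_nonneg (2 * p - q + 1/2), sq_nonneg (2 * p - q - 1/2), sq_nonneg (2 * p - q + 1), sq_nonneg (2 * p - q - 1)]
  · refine ⟨0, ?_, fun j hj => ?_⟩
    · simp [Dv, nq]
      nlinarith [sq_nonneg (2 * p - q), sq_nonneg (2 * p - q + 1/2), sq_nonneg (2 * p - q - 1/2), sq_nonneg (2 * p - q + 1), sq_nonneg (2 * p - q - 1)]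
    · fin_cases j <;> simp [Dv, nq] at hj ⊢ <;> constructor <;>
        nlinarith [sq_nonneg (2 * p - q), sq_nonneg (2 * p - q + 1/2), sq_nonneg (2 * p - q - 1/2), sq_nonneg (2 * p - q + 1), sq_nonneg (2 * p - q - 1)]
  · refine ⟨2, ?_, fun j hj => ?_⟩
    · simp [Dv, nq]
      nlinarith [sq_nonneg (p + q), sq_nonneg (p + q + 1/2), sq_nonneg (p + q - 1/2), sq_nonneg (p + q + 1), sq_nonneg (p + q - 1)]
    · fin_cases j <;> simp [Dv, nq] at hj ⊢ <;> constructor <;>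
        nlinarith [sq_nonneg (p + q), sq_nonneg (p + q + 1/2), sq_nonneg (p + q - 1/2), sq_nonneg (p + q + 1), sq_nonneg (p + q - 1)]
  · refine ⟨1, ?_, fun j hj => ?_⟩
    · simp [Dv, nq]
      nlinarith [sq_nonneg (p + q), sq_nonneg (p + q + 1/2), sq_nonneg (p + q - 1/2), sq_nonneg (p + q + 1), sq_nonneg (p + q - 1)]
    · fin_cases j <;> simp [Dv, nq] at hj ⊢ <;> constructor <;>
        nlinarith [sq_nonneg (p + q), sq_nonneg (p + q + 1/2), sq_nonneg (p + q - 1/2), sq_nonneg (p + q + 1), sq_nonneg (p + q - 1)]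

/-- Pointwise estimate of an affine function on the triangle. -/
lemma affine_half {b0 b1 b2 l0 l1 l2 : ℝ} (h0 : 0 ≤ b0) (h1 : 0 ≤ b1) (h2 : 0 ≤ b2)
    (hs : b0 + b1 + b2 = 1) (k0 : l0 ≤ 9/2) (k1 : l1 ≤ 0) (k2 : l2 ≤ 0)
    (k3 : 2 * l0 + l1 ≤ 0) (k4 : 2 * l0 + l2 ≤ 0) :
    b0 * l0 + b1 * l1 + b2 * l2 ≤ 9/2 * max (3 * b0 - 2) 0 := by
  have hm1 := le_max_left (3 * b0 - 2) 0
  have hm2 := le_max_right (3 * b0 - 2) 0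
  rcases le_total l0 0 with h | h
  · nlinarith [mul_nonneg h0 (neg_nonneg.2 h), mul_nonneg h1 (neg_nonneg.2 k1), mul_nonneg h2 (neg_nonneg.2 k2)]
  · have : b0 * l0 + b1 * l1 + b2 * l2 ≤ l0 * (3 * b0 - 2) := by
      have : b0 = 1 - b1 - b2 := by linarith
      subst this
      nlinarith [mul_nonneg h1 (neg_nonneg.2 k3), mul_nonneg h2 (neg_nonneg.2 k4)]
    have h5 : l0 * (3 * b0 - 2) ≤ l0 * max (3 * b0 - 2) 0 := mul_le_mul_of_nonneg_left hm1 h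
    have h6 : l0 * max (3 * b0 - 2) 0 ≤ 9/2 * max (3 * b0 - 2) 0 := mul_le_mul_of_nonneg_right k0 hm2
    linarith

/-- The linear-type bound. -/
lemma lin_bound {N p m : ℝ} (hN : 0 ≤ N) (hp0 : 0 ≤ p) (hp1 : p ≤ 1)
    (ha : m ^ 2 ≤ N / 12 * (p * (1 - p)))
    (hb : |m| ≤ p * √(N / 3)) (hc : |m| ≤ (1 - p) * √(N / 3)) :
    |m| ≤ 5/4 * √(N / 3) * (p * (1 - p)) := by
  have hs : 0 ≤ √(N / 3) := Real.sqrt_nonneg _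
  have hs2 : √(N / 3) ^ 2 = N / 3 := Real.sq_sqrt (by positivity)
  set s := √(N / 3)
  rcases le_total p (1/5) with h | h
  · nlinarith [mul_nonneg (mul_nonneg hs hp0) (sub_nonneg.2 h)]
  rcases le_total (4/5) p with h' | h'
  · nlinarith [mul_nonneg (mul_nonneg hs (sub_nonneg.2 hp1)) (sub_nonneg.2 h')]
  have hR : 4/25 ≤ p * (1 - p) := by nlinarith
  apply abs_le_of_sq_le_sq _ (by positivity)|> fun h => h
  have : N = 3 * s ^ 2 := by linarith
  rw [this] at ha
  nlinarith [mul_nonneg (sq_nonneg s) (mul_nonneg (sub_nonneg.2 hR) (by linarith : 0 ≤ p * (1 - p)))]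

/-- The algebra behind the variance bound. -/
lemma variance_algebra {N : ℝ} (hN : 0 ≤ N) {ρ p m : Fin 3 → ℝ}
    (hρ : ρ 0 + ρ 1 + ρ 2 = 0) (hρ2 : ρ 0 ^ 2 + ρ 1 ^ 2 + ρ 2 ^ 2 = 2/9 * N)
    (hp0 : ∀ i, 0 ≤ p i) (hp1 : ∀ i, p i ≤ 1)
    (ha : ∀ i, (m i) ^ 2 ≤ N / 12 * (p i * (1 - p i)))
    (hl : ∀ i, |m i| ≤ 5/4 * √(N / 3) * (p i * (1 - p i))) :
    (1/3 * ((ρ 0 * p 0 + m 0 / 3) + (ρ 1 * p 1 + m 1 / 3) + (ρ 2 * p 2 + m 2 / 3))) ^ 2 ≤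
      2/27 * N * ((1/3 * (p 0 + p 1 + p 2)) * (1 - 1/3 * (p 0 + p 1 + p 2))) := by
  have hs : 0 ≤ √(N / 3) := Real.sqrt_nonneg _
  have hs2 : √(N / 3) ^ 2 = N / 3 := Real.sq_sqrt (by positivity)
  set s := √(N / 3)
  obtain ⟨X, hX⟩ : ∃ X, X = ρ 0 * p 0 + ρ 1 * p 1 + ρ 2 * p 2 := ⟨_, rfl⟩
  obtain ⟨Y, hY⟩ : ∃ Y, Y = m 0 + m 1 + m 2 := ⟨_, rfl⟩
  obtain ⟨R, hR⟩ : ∃ R, R = p 0 * (1 - p 0) + p 1 * (1 - p 1) + p 2 * (1 - p 2) := ⟨_, rfl⟩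
  obtain ⟨Q, hQ⟩ : ∃ Q, Q = p 0 ^ 2 + p 1 ^ 2 + p 2 ^ 2 - (p 0 + p 1 + p 2) ^ 2 / 3 := ⟨_, rfl⟩
  have hRn : ∀ i, 0 ≤ p i * (1 - p i) := fun i => mul_nonneg (hp0 i) (sub_nonneg.2 (hp1 i))
  have hR0 : 0 ≤ R := by rw [hR]; linarith [hRn 0, hRn 1, hRn 2]
  have hQ1 : Q ≤ 2/3 := by
    have key : ∀ a b c : ℝ, 0 ≤ c → a ≤ 1 → c ≤ b → b ≤ a →
        a ^ 2 + b ^ 2 + c ^ 2 - (a + b + c) ^ 2 / 3 ≤ 2/3 := by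
      intro a b c h1 h2 h3 h4
      nlinarith [mul_nonneg (sub_nonneg.2 h3) (sub_nonneg.2 h4)]
    rw [hQ]
    have a0 := hp0 0; have a1 := hp0 1; have a2 := hp0 2
    have b0 := hp1 0; have b1 := hp1 1; have b2 := hp1 2
    rcases le_total (p 0) (p 1) with h1 | h1 <;> rcases le_total (p 1) (p 2) with h2 | h2 <;>
      rcases le_total (p 0) (p 2) with h3 | h3
    · linarith [key _ _ _ a0 b2 h1 h2]
    · linarith [key _ _ _ a0 b2 h1 h2]
    · linarith [key _ _ _ a0 b1 h3 h2]
    · linarith [key _ _ _ a2 b1 h3 h1]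
    · linarith [key _ _ _ a1 b2 h1 h3]
    · linarith [key _ _ _ a1 b0 h2 h3]
    · linarith [key _ _ _ a2 b0 h2 h1]
    · linarith [key _ _ _ a2 b0 h2 h1]
  have hX2 : X ^ 2 ≤ 2/9 * N * Q := by
    have hr2 : ρ 2 = - ρ 0 - ρ 1 := by linarith
    rw [← hρ2, hX, hQ, hr2]
    nlinarith [sq_nonneg (ρ 0 * (p 1 - p 2) - ρ 1 * (p 0 - p 2) + 0),
      sq_nonneg (ρ 0 * (2 * p 1 - p 0 - p 2) - ρ 1 * (2 * p 0 - p 1 - p 2))]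
  have hXs : |X| ≤ 2/3 * s := by
    apply abs_le_of_sq_le_sq _ (by positivity)
    nlinarith
  have hYl : |Y| ≤ 5/4 * s * R := by
    rw [hY, hR]
    have := abs_add_three (m 0) (m 1) (m 2)
    linarith [hl 0, hl 1, hl 2]
  have hY2 : Y ^ 2 ≤ N / 4 * R := by
    rw [hY, hR]
    nlinarith [ha 0, ha 1, ha 2, sq_nonneg (m 0 - m 1), sq_nonneg (m 0 - m 2), sq_nonneg (m 1 - m 2)]
  have hXY : X * Y ≤ 5/18 * N * R := by
    have h1 : X * Y ≤ |X| * |Y| := by rw [← abs_mul]; exact le_abs_self _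
    have h2 : |X| * |Y| ≤ (2/3 * s) * (5/4 * s * R) := by gcongr
    have h3 : (2/3 * s) * (5/4 * s * R) = 5/6 * s ^ 2 * R := by ring
    rw [h3, hs2] at h2
    linarith
  have e1 : (1/3 * ((ρ 0 * p 0 + m 0 / 3) + (ρ 1 * p 1 + m 1 / 3) + (ρ 2 * p 2 + m 2 / 3)))
      = (3 * X + Y) / 9 := by rw [hX, hY]; ring
  have e2 : (1/3 * (p 0 + p 1 + p 2)) * (1 - 1/3 * (p 0 + p 1 + p 2)) = (Q + R) / 3 := by
    rw [hQ, hR]; ring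
  rw [e1, e2]
  nlinarith [mul_nonneg hN hR0]

/-! ### The maps and coordinates -/

def sh : Fin 3 → E2 := ![pt 0 0, pt (2/3) 0, pt (1/3) (√3 / 3)]

/-- The three similarities, indexed. -/
def T (i : Fin 3) (x : E2) : E2 := (3 : ℝ)⁻¹ • x + sh i

/-- Their inverses. -/
def Ti (i : Fin 3) (a : E2) : E2 := (3 : ℝ) • (a - sh i)

lemma pt_zero (a b : ℝ) : (pt a b) 0 = a := rfl
lemma pt_one (a b : ℝ) : (pt a b) 1 = b := rfl

def sx : Fin 3 → ℝ := ![0, 2/3, 1/3]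
def sy : Fin 3 → ℝ := ![0, 0, √3 / 3]

lemma sh_zero (i : Fin 3) : (sh i) 0 = sx i := by
  fin_cases i <;> rfl
lemma sh_one (i : Fin 3) : (sh i) 1 = sy i := by
  fin_cases i <;> rfl

lemma T_zero (i : Fin 3) (x : E2) : (T i x) 0 = x 0 / 3 + sx i := by
  simp [T, sh_zero]; ring
lemma T_one (i : Fin 3) (x : E2) : (T i x) 1 = x 1 / 3 + sy i := by
  simp [T, sh_one]; ring
lemma Ti_zero (i : Fin 3) (x : E2) : (Ti i x) 0 = 3 * (x 0 - sx i) := by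
  simp [Ti, sh_zero]
lemma Ti_one (i : Fin 3) (x : E2) : (Ti i x) 1 = 3 * (x 1 - sy i) := by
  simp [Ti, sh_one]

lemma S1_eq : S1 = T 0 := by
  funext x
  ext k
  fin_cases k
  · simp [S1, T_zero, sx]; ring
  · simp [S1, T_one, sy]; ring
lemma S2_eq : S2 = T 1 := rfl
lemma S3_eq : S3 = T 2 := rfl

lemma T_cont (i : Fin 3) : Continuous (T i) := by
  unfold T; fun_prop

lemma Ti_T (i : Fin 3) (x : E2) : T i (Ti i x) = x := by
  simp [T, Ti, smul_smul]

lemma Ti_T' (i : Fin 3) (x : E2) : Ti i (T i x) = x := by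
  simp [T, Ti, smul_smul]

lemma nsq (x y : E2) : ‖x - y‖ ^ 2 = (x 0 - y 0) ^ 2 + (x 1 - y 1) ^ 2 := by
  rw [EuclideanSpace.norm_sq_eq, Fin.sum_univ_two]
  simp

lemma norm_T (i : Fin 3) (y a : E2) : ‖T i y - a‖ ^ 2 = 1/9 * ‖y - Ti i a‖ ^ 2 := by
  rw [nsq, nsq, T_zero, T_one, Ti_zero, Ti_one]; ring

lemma s3 : (√3 : ℝ) ^ 2 = 3 := Real.sq_sqrt (by norm_num)

/-- Barycentric coordinates. -/
def bary : Fin 3 → E2 → ℝ :=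
  ![fun x => 1 - x 0 - x 1 * √3 / 3, fun x => x 0 - x 1 * √3 / 3, fun x => 2 * (x 1 * √3 / 3)]

lemma bary_cont (i : Fin 3) : Continuous (bary i) := by
  fin_cases i <;> simp [bary] <;> fun_prop

lemma bary_sum (x : E2) : bary 0 x + bary 1 x + bary 2 x = 1 := by
  simp [bary]; ring

lemma bary_T (i j : Fin 3) (x : E2) : bary i (T j x) = bary i x / 3 + if i = j then 2/3 else 0 := by
  have h := s3
  fin_cases i <;> fin_cases j <;> simp [bary, T_zero, T_one, sx, sy] <;> nlinarith [h]

/-- The centroid. -/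
def cen : E2 := pt (1/2) (√3 / 6)

lemma cen_zero : cen 0 = 1/2 := rfl
lemma cen_one : cen 1 = √3 / 6 := rfl

def cp (a : E2) : ℝ := a 0 - 1/2
def cq (a : E2) : ℝ := a 0 / 2 + √3 / 2 * a 1 - 1/2

/-- The charge of a point. -/
def wt (a : E2) : ℝ := chg (cp a) (cq a)

lemma wt_super (a : E2) : wt (Ti 0 a) + wt (Ti 1 a) + wt (Ti 2 a) ≤ wt a := by
  have h := s3
  have h0 : cp (Ti 0 a) = 3 * cp a + 1 := by simp [cp, Ti_zero, sx]; ring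
  have h1 : cp (Ti 1 a) = 3 * cp a - 1 := by simp [cp, Ti_zero, sx]; ring
  have h2 : cp (Ti 2 a) = 3 * cp a := by simp [cp, Ti_zero, sx]; ring
  have k0 : cq (Ti 0 a) = 3 * cq a + 1 := by simp [cq, Ti_zero, Ti_one, sx, sy]; ring
  have k1 : cq (Ti 1 a) = 3 * cq a := by simp [cq, Ti_zero, Ti_one, sx, sy]; ring
  have k2 : cq (Ti 2 a) = 3 * cq a - 1 := by simp [cq, Ti_zero, Ti_one, sx, sy]; nlinarith
  unfold wt
  rw [h0, h1, h2, k0, k1, k2]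
  exact chg_super _ _

lemma dist_bary (x a : E2) : ‖x - a‖ ^ 2 - ‖x - cen‖ ^ 2 =
    bary 0 x * Dv (cp a) (cq a) 0 + bary 1 x * Dv (cp a) (cq a) 1
      + bary 2 x * Dv (cp a) (cq a) 2 := by
  have h := s3
  rw [nsq, nsq, cen_zero, cen_one]
  simp only [bary, Dv, nq, cp, cq, Matrix.cons_val_zero, Matrix.cons_val_one, Matrix.cons_val]
  obtain ⟨y, hy⟩ : ∃ y, x 1 = √3 * y := ⟨x 1 / √3, by field_simp⟩
  obtain ⟨b, hb⟩ : ∃ y, a 1 = √3 * y := ⟨a 1 / √3, by field_simp⟩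
  rw [hy, hb]
  have e1 : √3 * y * √3 = 3 * y := by linear_combination y * h
  have e2 : √3 / 2 * (√3 * b) = 3/2 * b := by linear_combination b/2 * h
  rw [e1, e2]
  linear_combination ((y - b)^2 - (y - 1/6)^2) * h

/-- `⟨x - c, (u, v)⟩`. -/
def gf (u v : ℝ) (x : E2) : ℝ := (x 0 - 1/2) * u + (x 1 - √3 / 6) * v

lemma gf_cont (u v : ℝ) : Continuous (gf u v) := by unfold gf; fun_prop

def rho (u v : ℝ) : Fin 3 → ℝ := ![-u/3 - √3/9 * v, u/3 - √3/9 * v, 2 * √3/9 * v]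

lemma gf_T (u v : ℝ) (i : Fin 3) (x : E2) : gf u v (T i x) = rho u v i + gf u v x / 3 := by
  fin_cases i <;> simp [gf, rho, T_zero, T_one, sx, sy] <;> ring

lemma rho_sum (u v : ℝ) : rho u v 0 + rho u v 1 + rho u v 2 = 0 := by
  simp [rho]; ring

lemma rho_sq (u v : ℝ) : rho u v 0 ^ 2 + rho u v 1 ^ 2 + rho u v 2 ^ 2 = 2/9 * (u^2 + v^2) := by
  simp [rho]
  linear_combination (6/81 * v^2) * s3

lemma dist_gf (x a : E2) : ‖x - a‖ ^ 2 = ‖x - cen‖ ^ 2 +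
    ((a 0 - 1/2)^2 + (a 1 - √3/6)^2) - 2 * gf (a 0 - 1/2) (a 1 - √3/6) x := by
  rw [nsq, nsq, cen_zero, cen_one]; unfold gf; ring

lemma cen_bary (x : E2) : ‖x - cen‖ ^ 2 =
    1/3 - (bary 0 x * bary 1 x + bary 1 x * bary 2 x + bary 0 x * bary 2 x) := by
  have h := s3
  rw [nsq, cen_zero, cen_one]
  simp only [bary, Matrix.cons_val_zero, Matrix.cons_val_one, Matrix.cons_val]
  obtain ⟨y, hy⟩ : ∃ y, x 1 = √3 * y := ⟨x 1 / √3, by field_simp⟩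
  rw [hy]
  have e1 : √3 * y * √3 = 3 * y := by linear_combination y * h
  rw [e1]
  linear_combination ((y - 1/6)^2) * h

lemma gf_bound (u v : ℝ) (x : E2) (h : ∀ i, 0 ≤ bary i x) : |gf u v x| ≤ √((u^2 + v^2) / 3) := by
  apply Real.abs_le_sqrt
  have h1 : ‖x - cen‖ ^ 2 ≤ 1/3 := by
    rw [cen_bary]
    linarith [mul_nonneg (h 0) (h 1), mul_nonneg (h 1) (h 2), mul_nonneg (h 0) (h 2)]
  rw [nsq, cen_zero, cen_one] at h1
  unfold gf
  nlinarith [sq_nonneg ((x 0 - 1/2) * v - (x 1 - √3/6) * u), sq_nonneg u, sq_nonneg v,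
    mul_nonneg (add_nonneg (sq_nonneg u) (sq_nonneg v)) (sub_nonneg.2 h1)]

/-! ### Integration against the invariant measure -/

section meas
variable (P : Measure E2) [IsProbabilityMeasure P]

/-- Invariance. -/
def RInv : Prop := P = (3 : ℝ≥0∞)⁻¹ • (P.map (T 0) + P.map (T 1) + P.map (T 2))

variable {P}

set_option linter.unusedSectionVars false in
lemma meas_selfsim (hP : RInv P) {s : Set E2} (hs : MeasurableSet s) :
    P s = 3⁻¹ * (P (T 0 ⁻¹' s) + P (T 1 ⁻¹' s) + P (T 2 ⁻¹' s)) := by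
  have h := congrArg (fun μ : Measure E2 => μ s) hP
  simp only [Measure.smul_apply, Measure.add_apply, smul_eq_mul,
    Measure.map_apply (T_cont _).measurable hs] at h
  exact h

lemma ae_nonneg_of_contr (hP : RInv P) {h : E2 → ℝ} (hm : Measurable h)
    (hh : ∀ i x, h x / 3 ≤ h (T i x)) : ∀ᵐ x ∂P, 0 ≤ h x := by
  have mset : ∀ t : ℝ, MeasurableSet {x | -t ≤ h x} := fun t => measurableSet_le measurable_const hm
  have step : ∀ t : ℝ, P {x | -(3 * t) ≤ h x} ≤ P {x | -t ≤ h x} := by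
    intro t
    have hsub : ∀ i, P {x | -(3 * t) ≤ h x} ≤ P (T i ⁻¹' {x | -t ≤ h x}) := by
      intro i
      apply measure_mono
      intro x hx
      simp only [Set.mem_ofPred_eq, Set.mem_preimage] at hx ⊢
      have := hh i x
      linarith
    rw [meas_selfsim hP (mset t)]
    calc P {x | -(3 * t) ≤ h x}
        = 3⁻¹ * (P {x | -(3 * t) ≤ h x} + P {x | -(3 * t) ≤ h x} + P {x | -(3 * t) ≤ h x}) := by
          rw [show ∀ z : ℝ≥0∞, z + z + z = 3 * z from fun z => by ring, ← mul_assoc,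
            ENNReal.inv_mul_cancel (by norm_num) (by norm_num), one_mul]
      _ ≤ _ := by
          exact mul_le_mul_right (add_le_add (add_le_add (hsub 0) (hsub 1)) (hsub 2)) _
  have step' : ∀ (t : ℝ) (k : ℕ), P {x | -(3 ^ k * t) ≤ h x} ≤ P {x | -t ≤ h x} := by
    intro t k
    induction k with
    | zero => simp
    | succ k ih =>
      refine le_trans ?_ ih
      have := step (3 ^ k * t)
      rwa [← mul_assoc, ← pow_succ'] at this
  have full : ∀ t : ℝ, 0 < t → P {x | -t ≤ h x} = 1 := by
    intro t ht
    have hmono : Monotone (fun k : ℕ => {x : E2 | -((3:ℝ) ^ k * t) ≤ h x}) := by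
      intro a b hab x hx
      simp only [Set.mem_ofPred_eq] at hx ⊢
      have : (3:ℝ) ^ a * t ≤ 3 ^ b * t := by gcongr; norm_num
      linarith
    have hU : (⋃ k : ℕ, {x : E2 | -((3:ℝ) ^ k * t) ≤ h x}) = Set.univ := by
      ext x
      simp only [Set.mem_iUnion, Set.mem_ofPred_eq, Set.mem_univ, iff_true]
      obtain ⟨k, hk⟩ := pow_unbounded_of_one_lt (-(h x) / t) (by norm_num : (1:ℝ) < 3)
      refine ⟨k, ?_⟩
      rw [div_lt_iff₀ ht] at hk
      linarith
    have h1 := hmono.measure_iUnion (μ := P)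
    rw [hU, measure_univ] at h1
    apply le_antisymm prob_le_one
    rw [h1]
    exact iSup_le (step' t)
  have : ∀ k : ℕ, ∀ᵐ x ∂P, -(1 / ((k:ℝ) + 1)) ≤ h x := by
    intro k
    have := full (1 / ((k:ℝ) + 1)) (by positivity)
    rw [ae_iff]
    have h2 := prob_compl_eq_zero_iff (μ := P) (mset (1 / ((k:ℝ) + 1)))
    exact h2.2 this
  rw [← ae_all_iff] at this
  filter_upwards [this] with x hx
  by_contra hc
  push Not at hc
  obtain ⟨k, hk⟩ := exists_nat_one_div_lt (neg_pos.2 hc)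
  linarith [hx k]

lemma ae_bary (hP : RInv P) : ∀ᵐ x ∂P, ∀ i, 0 ≤ bary i x := by
  rw [ae_all_iff]
  intro i
  apply ae_nonneg_of_contr hP (bary_cont i).measurable
  intro j x
  rw [bary_T]
  split_ifs <;> linarith

lemma int_cont (hP : RInv P) {F : E2 → ℝ} (hF : Continuous F) : Integrable F P := by
  have hK := isCompact_closedBall (0 : E2) 2
  obtain ⟨C, hC⟩ := hK.exists_bound_of_continuousOn hF.continuousOn
  apply Integrable.mono' (integrable_const C) hF.aestronglyMeasurable
  filter_upwards [ae_bary hP] with x hx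
  apply hC
  rw [mem_closedBall_zero_iff]
  have h1 := hx 0
  have h2 := hx 1
  have h3 := hx 2
  simp only [bary, Matrix.cons_val_zero, Matrix.cons_val_one, Matrix.cons_val] at h1 h2 h3
  have h4 : 0 ≤ x 0 := by linarith
  have h5 : x 0 ≤ 1 := by linarith
  have hs := s3
  have hs0 : 1 ≤ √3 := by rw [Real.one_le_sqrt]; norm_num
  have h7 : x 1 * √3 ≤ 3 := by linarith
  have h6 : 0 ≤ x 1 * √3 := by linarith
  have h8 : (x 1) ^ 2 ≤ 3 := by nlinarith
  have : ‖x‖ ^ 2 ≤ 2 ^ 2 := by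
    rw [EuclideanSpace.norm_sq_eq, Fin.sum_univ_two]
    simp only [Real.norm_eq_abs, sq_abs]
    nlinarith
  exact abs_le_of_sq_le_sq' this (by norm_num) |>.2

lemma int_dom (hP : RInv P) {F G : E2 → ℝ} (hF : Measurable F) (hG : Continuous G)
    (h : ∀ x, |F x| ≤ G x) : Integrable F P :=
  Integrable.mono' (int_cont hP hG) hF.aestronglyMeasurable (Filter.Eventually.of_forall h)

lemma int_mul (hP : RInv P) {f F : E2 → ℝ} (hf : Measurable f) (h0 : ∀ x, 0 ≤ f x)
    (h1 : ∀ x, f x ≤ 1) (hF : Continuous F) : Integrable (fun x => f x * F x) P := by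
  apply int_dom hP (hf.mul hF.measurable) (continuous_abs.comp hF)
  intro x
  change |f x * F x| ≤ |F x|
  rw [abs_mul, abs_of_nonneg (h0 x)]
  exact mul_le_of_le_one_left (abs_nonneg _) (h1 x)

lemma integral_selfsim (hP : RInv P) {F : E2 → ℝ} (hF : Integrable F P) :
    ∫ x, F x ∂P = 1/3 * (∫ x, F (T 0 x) ∂P + ∫ x, F (T 1 x) ∂P + ∫ x, F (T 2 x) ∂P) := by
  have h := congrArg (fun μ : Measure E2 => ∫ x, F x ∂μ) hP
  have hF' : Integrable F ((3 : ℝ≥0∞)⁻¹ • (P.map (T 0) + P.map (T 1) + P.map (T 2))) := by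
    have h2 := hF
    rw [hP] at h2
    exact h2
  rw [integrable_smul_measure (by norm_num) (by norm_num), integrable_add_measure,
    integrable_add_measure] at hF'
  obtain ⟨⟨i0, i1⟩, i2⟩ := hF'
  rw [h, integral_smul_measure, integral_add_measure (i0.add_measure i1) i2,
    integral_add_measure i0 i1,
    integral_map (T_cont 0).measurable.aemeasurable i0.1,
    integral_map (T_cont 1).measurable.aemeasurable i1.1,
    integral_map (T_cont 2).measurable.aemeasurable i2.1]
  simp

/-! ### Moments -/

lemma integral_lin3 {A B : E2 → ℝ} (hA : Integrable A P) (hB : Integrable B P) (k a b : ℝ) :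
    ∫ x, (k + a * A x + b * B x) ∂P = k + a * ∫ x, A x ∂P + b * ∫ x, B x ∂P := by
  have h1 : Integrable (fun x => k + a * A x) P := (integrable_const k).add (hA.const_mul a)
  rw [integral_add h1 (hB.const_mul b), integral_add (integrable_const k) (hA.const_mul a),
    integral_const_mul, integral_const_mul]
  simp

lemma gf_mean (hP : RInv P) (u v : ℝ) : ∫ x, gf u v x ∂P = 0 := by
  have hi := int_cont hP (gf_cont u v)
  have h := integral_selfsim hP hi
  simp only [gf_T] at h
  have e : ∀ i, ∫ x, (rho u v i + gf u v x / 3) ∂P = rho u v i + (∫ x, gf u v x ∂P) / 3 := by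
    intro i
    rw [integral_add (integrable_const _) (hi.div_const 3), integral_div]
    simp
  rw [e, e, e] at h
  linarith [rho_sum u v]

lemma gf_var (hP : RInv P) (u v : ℝ) : ∫ x, gf u v x ^ 2 ∂P = (u^2 + v^2) / 12 := by
  have hi := int_cont hP (gf_cont u v)
  have hi2 := int_cont hP (F := fun x => gf u v x ^ 2) ((gf_cont u v).pow 2)
  have h := integral_selfsim hP hi2
  simp only [gf_T] at h
  have e : ∀ i, ∫ x, (rho u v i + gf u v x / 3) ^ 2 ∂P
      = rho u v i ^ 2 + (∫ x, gf u v x ^ 2 ∂P) / 9 := by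
    intro i
    have : ∀ x, (rho u v i + gf u v x / 3) ^ 2
        = rho u v i ^ 2 + (2/3 * rho u v i) * gf u v x + 1/9 * gf u v x ^ 2 := fun x => by ring
    simp only [this]
    have h3 := integral_lin3 hi hi2 (rho u v i ^ 2) (2/3 * rho u v i) (1/9)
    rw [gf_mean hP] at h3
    rw [h3]; ring
  rw [e, e, e] at h
  linarith [rho_sq u v]

lemma bary_mean (hP : RInv P) (i : Fin 3) : ∫ x, bary i x ∂P = 1/3 := by
  have hi := int_cont hP (bary_cont i)
  have h := integral_selfsim hP hi
  simp only [bary_T] at h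
  have e : ∀ r : ℝ, ∫ x, (bary i x / 3 + r) ∂P = (∫ x, bary i x ∂P) / 3 + r := by
    intro r
    rw [integral_add (hi.div_const 3) (integrable_const _), integral_div]
    simp
  rw [e, e, e] at h
  fin_cases i <;> simp at h ⊢ <;> linarith

lemma bary_pos_mean (hP : RInv P) (i : Fin 3) : ∫ x, max (3 * bary i x - 2) 0 ∂P = 1/9 := by
  have hc : Continuous (fun x => max (3 * bary i x - 2) 0) := by
    have := bary_cont i
    fun_prop
  have h := integral_selfsim hP (int_cont hP hc)
  have e : ∀ j, ∫ x, max (3 * bary i (T j x) - 2) 0 ∂P = if i = j then 1/3 else 0 := by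
    intro j
    by_cases hij : i = j
    · rw [if_pos hij, ← bary_mean hP i]
      apply integral_congr_ae
      filter_upwards [ae_bary hP] with x hx
      rw [bary_T, if_pos hij, show 3 * (bary i x / 3 + 2/3) - 2 = bary i x by ring]
      exact max_eq_left (hx i)
    · rw [if_neg hij]
      have : ∫ x, max (3 * bary i (T j x) - 2) 0 ∂P = ∫ x, (0:ℝ) ∂P := by
        apply integral_congr_ae
        filter_upwards [ae_bary hP] with x hx
        rw [bary_T, if_neg hij]
        apply max_eq_right
        have hs := bary_sum x
        have h0 := hx 0
        have h1 := hx 1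
        have h2 := hx 2
        have : bary i x ≤ 1 := by fin_cases i <;> simp <;> linarith
        linarith
      rw [this]; simp
  rw [e, e, e] at h
  rw [h]
  fin_cases i <;> simp <;> norm_num

lemma cen_var (hP : RInv P) : ∫ x, ‖x - cen‖ ^ 2 ∂P = 1/6 := by
  have : ∀ x, ‖x - cen‖ ^ 2 = gf 1 0 x ^ 2 + gf 0 1 x ^ 2 := by
    intro x
    rw [nsq, cen_zero, cen_one]; unfold gf; ring
  simp only [this]
  rw [integral_add (int_cont hP (F := fun x => gf 1 0 x ^ 2) ((gf_cont _ _).pow 2))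
      (int_cont hP (F := fun x => gf 0 1 x ^ 2) ((gf_cont _ _).pow 2)),
    gf_var hP, gf_var hP]
  norm_num

lemma norm_mean (hP : RInv P) (a : E2) :
    ∫ x, ‖x - a‖ ^ 2 ∂P = 1/6 + ((a 0 - 1/2)^2 + (a 1 - √3/6)^2) := by
  simp only [dist_gf _ a]
  have i1 : Integrable (fun x : E2 => ‖x - cen‖ ^ 2) P := int_cont hP (by fun_prop)
  have i2 := int_cont hP (gf_cont (a 0 - 1/2) (a 1 - √3/6))
  have h3 := integral_lin3 i1 i2 ((a 0 - 1/2)^2 + (a 1 - √3/6)^2) 1 (-2)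
  rw [gf_mean hP, cen_var hP] at h3
  rw [show (1/6 + ((a 0 - 1/2)^2 + (a 1 - √3/6)^2) : ℝ) =
    ((a 0 - 1/2)^2 + (a 1 - √3/6)^2) + 1 * (1/6) + (-2) * 0 by ring, ← h3]
  congr 1
  funext x
  ring

/-! ### The variance bound and the inequality for one point -/

lemma basic_bounds (hP : RInv P) (u v : ℝ) {f : E2 → ℝ} (hf : Measurable f) (h0 : ∀ x, 0 ≤ f x)
    (h1 : ∀ x, f x ≤ 1) :
    0 ≤ ∫ x, f x ∂P ∧ ∫ x, f x ∂P ≤ 1 ∧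
    (∫ x, f x * gf u v x ∂P) ^ 2 ≤ (u^2 + v^2) / 12 * ((∫ x, f x ∂P) * (1 - ∫ x, f x ∂P)) ∧
    |∫ x, f x * gf u v x ∂P| ≤ 5/4 * √((u^2 + v^2) / 3) * ((∫ x, f x ∂P) * (1 - ∫ x, f x ∂P)) := by
  have hN : 0 ≤ u^2 + v^2 := by positivity
  have if1 : Integrable f P := by
    have := int_mul hP hf h0 h1 (F := fun _ => 1) continuous_const
    simpa using this
  have ifg := int_mul hP hf h0 h1 (gf_cont u v)
  have ig := int_cont hP (gf_cont u v)
  have ig2 := int_cont hP (F := fun x => gf u v x ^ 2) ((gf_cont u v).pow 2)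
  have if2 : Integrable (fun x => f x ^ 2) P := by
    apply int_dom hP (hf.pow_const 2) (G := fun _ => 1) continuous_const
    intro x
    rw [abs_of_nonneg (by positivity)]
    exact pow_le_one₀ (h0 x) (h1 x)
  have hp0 : 0 ≤ ∫ x, f x ∂P := integral_nonneg h0
  have hp1 : ∫ x, f x ∂P ≤ 1 := by
    have := integral_mono if1 (integrable_const (1:ℝ)) h1
    simpa using this
  have hf2 : ∫ x, f x ^ 2 ∂P ≤ ∫ x, f x ∂P := by
    apply integral_mono if2 if1
    intro x
    have := h0 x
    have := h1 x
    simp only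
    nlinarith
  obtain ⟨p, hp⟩ : ∃ p, p = ∫ x, f x ∂P := ⟨_, rfl⟩
  obtain ⟨m, hm⟩ : ∃ m, m = ∫ x, f x * gf u v x ∂P := ⟨_, rfl⟩
  rw [← hp] at hp0 hp1 hf2 ⊢
  rw [← hm]
  have quad : ∀ t s : ℝ, 0 ≤ s ^ 2 * ((u^2 + v^2) / 12) - 2 * s * t * m + t ^ 2 * (p * (1 - p)) := by
    intro t s
    have hpos : 0 ≤ ∫ x, (s * gf u v x - t * (f x - p)) ^ 2 ∂P := integral_nonneg fun x => sq_nonneg _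
    have e : ∀ x, (s * gf u v x - t * (f x - p)) ^ 2 =
        (0 + s ^ 2 * gf u v x ^ 2 + (-2 * s * t) * (f x * gf u v x)) +
        (t ^ 2 * p ^ 2 + (t ^ 2) * (f x ^ 2) + (- 2 * t ^ 2 * p) * f x) +
          (0 + (2 * s * t * p) * gf u v x + 0 * gf u v x) := by
      intro x; ring
    simp only [e] at hpos
    have j1 : Integrable (fun x => 0 + s ^ 2 * gf u v x ^ 2 + (-2 * s * t) * (f x * gf u v x)) P :=
      ((integrable_const (0:ℝ)).add (ig2.const_mul _)).add (ifg.const_mul _)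
    have j2 : Integrable (fun x => t ^ 2 * p ^ 2 + (t ^ 2) * (f x ^ 2) + (- 2 * t ^ 2 * p) * f x) P :=
      ((integrable_const _).add (if2.const_mul _)).add (if1.const_mul _)
    have j3 : Integrable (fun x => 0 + (2 * s * t * p) * gf u v x + 0 * gf u v x) P :=
      ((integrable_const _).add (ig.const_mul _)).add (ig.const_mul _)
    have j12 : Integrable (fun x => (0 + s ^ 2 * gf u v x ^ 2 + (-2 * s * t) * (f x * gf u v x)) +
        (t ^ 2 * p ^ 2 + (t ^ 2) * (f x ^ 2) + (- 2 * t ^ 2 * p) * f x)) P := j1.add j2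
    rw [integral_add j12 j3, integral_add j1 j2, integral_lin3 ig2 ifg, integral_lin3 if2 if1,
      integral_lin3 ig ig, gf_mean hP, gf_var hP, ← hm, ← hp] at hpos
    nlinarith [mul_le_mul_of_nonneg_left hf2 (sq_nonneg t)]
  have hA : m ^ 2 ≤ (u^2 + v^2) / 12 * (p * (1 - p)) := by
    have hR : 0 ≤ p * (1 - p) := mul_nonneg hp0 (by linarith)
    rcases hR.lt_or_eq with hR | hR
    · have := quad m (p * (1 - p))
      have h2 : 0 ≤ (p * (1 - p)) * ((p * (1 - p)) * ((u^2 + v^2) / 12) - m ^ 2) := by nlinarith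
      have := nonneg_of_mul_nonneg_right h2 hR
      linarith
    · rcases hN.lt_or_eq with hN | hN
      · have := quad ((u^2 + v^2) / 12) m
        rw [← hR] at this ⊢
        nlinarith
      · have h := quad 1 m
        have h' := quad 1 (m)
        rw [← hR, ← hN] at h
        rw [← hR]
        nlinarith
  refine ⟨hp0, hp1, hA, ?_⟩
  have hgb : ∀ᵐ x ∂P, |gf u v x| ≤ √((u^2 + v^2) / 3) := by
    filter_upwards [ae_bary hP] with x hx using gf_bound u v x hx
  apply lin_bound hN hp0 hp1 hA
  · rw [hm, hp, ← integral_mul_const]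
    apply (abs_integral_le_integral_abs).trans
    apply integral_mono_ae ifg.abs (if1.mul_const _)
    filter_upwards [hgb] with x hx
    rw [abs_mul, abs_of_nonneg (h0 x)]
    exact mul_le_mul_of_nonneg_left hx (h0 x)
  · have e1 : m = - ∫ x, (1 - f x) * gf u v x ∂P := by
      have : ∀ x, (1 - f x) * gf u v x = gf u v x - f x * gf u v x := fun x => by ring
      simp only [this]
      rw [integral_sub ig ifg, gf_mean hP, ← hm]; ring
    have e2 : 1 - p = ∫ x, (1 - f x) ∂P := by
      rw [integral_sub (integrable_const _) if1, ← hp]; simp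
    have ic : Integrable (fun x => 1 - f x) P := (integrable_const _).sub if1
    have icg : Integrable (fun x => (1 - f x) * gf u v x) P :=
      int_mul hP (measurable_const.sub hf) (fun x => by linarith [h1 x]) (fun x => by linarith [h0 x])
        (gf_cont u v)
    rw [e1, e2, abs_neg, ← integral_mul_const]
    apply (abs_integral_le_integral_abs).trans
    apply integral_mono_ae icg.abs (ic.mul_const _)
    filter_upwards [hgb] with x hx
    have := h1 x
    rw [abs_mul, abs_of_nonneg (by linarith : 0 ≤ 1 - f x)]
    exact mul_le_mul_of_nonneg_left hx (by linarith)

lemma variance_bound (hP : RInv P) (u v : ℝ) {f : E2 → ℝ} (hf : Measurable f) (h0 : ∀ x, 0 ≤ f x)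
    (h1 : ∀ x, f x ≤ 1) :
    (∫ x, f x * gf u v x ∂P) ^ 2 ≤
      2/27 * (u^2 + v^2) * ((∫ x, f x ∂P) * (1 - ∫ x, f x ∂P)) := by
  have if1 : Integrable f P := by
    have := int_mul hP hf h0 h1 (F := fun _ => 1) continuous_const
    simpa using this
  have ifg := int_mul hP hf h0 h1 (gf_cont u v)
  have hfT : ∀ i, Measurable (fun x => f (T i x)) := fun i => hf.comp (T_cont i).measurable
  have iT : ∀ i, Integrable (fun x => f (T i x)) P := by
    intro i
    have := int_mul hP (hfT i) (fun x => h0 _) (fun x => h1 _) (F := fun _ => 1) continuous_const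
    simpa using this
  have igT : ∀ i, Integrable (fun x => f (T i x) * gf u v x) P := fun i =>
    int_mul hP (hfT i) (fun x => h0 _) (fun x => h1 _) (gf_cont u v)
  have bb := fun i => basic_bounds hP u v (hfT i) (fun x => h0 _) (fun x => h1 _)
  have key := variance_algebra (N := u^2 + v^2) (by positivity) (ρ := rho u v)
    (p := fun i => ∫ x, f (T i x) ∂P) (m := fun i => ∫ x, f (T i x) * gf u v x ∂P)
    (rho_sum u v) (rho_sq u v) (fun i => (bb i).1) (fun i => (bb i).2.1) (fun i => (bb i).2.2.1)
    (fun i => (bb i).2.2.2)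
  rw [integral_selfsim hP if1, integral_selfsim hP ifg]
  have e : ∀ i, ∫ x, f (T i x) * gf u v (T i x) ∂P =
      rho u v i * (∫ x, f (T i x) ∂P) + (∫ x, f (T i x) * gf u v x ∂P) / 3 := by
    intro i
    have h3 := integral_lin3 (iT i) (igT i) 0 (rho u v i) (1/3)
    have : ∀ x, f (T i x) * gf u v (T i x) =
        0 + rho u v i * f (T i x) + 1/3 * (f (T i x) * gf u v x) := by
      intro x; rw [gf_T]; ring
    simp only [this]
    rw [h3]; ring
  rw [e, e, e]
  exact key

/-- The inequality for one point of the quantizer. -/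
lemma point_ineq (hP : RInv P) (a : E2) {f : E2 → ℝ} (hf : Measurable f) (h0 : ∀ x, 0 ≤ f x)
    (h1 : ∀ x, f x ≤ 1) :
    ∫ x, f x * ‖x - cen‖ ^ 2 ∂P + 2/27 * (∫ x, f x ∂P - wt a) ≤ ∫ x, f x * ‖x - a‖ ^ 2 ∂P := by
  have if1 : Integrable f P := by
    have := int_mul hP hf h0 h1 (F := fun _ => 1) continuous_const
    simpa using this
  have ic : Integrable (fun x => f x * ‖x - cen‖ ^ 2) P := int_mul hP hf h0 h1 (by fun_prop)
  have ia : Integrable (fun x => f x * ‖x - a‖ ^ 2) P := int_mul hP hf h0 h1 (by fun_prop)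
  rcases chg_cases (cp a) (cq a) with ⟨hw, _⟩ | ⟨hw, hn, _⟩ | ⟨hw, hn⟩
  · have hw' : wt a = 1 := hw
    rw [hw']
    obtain ⟨u, hu⟩ : ∃ u, u = a 0 - 1/2 := ⟨_, rfl⟩
    obtain ⟨v, hv⟩ : ∃ v, v = a 1 - √3/6 := ⟨_, rfl⟩
    have hg := variance_bound hP u v hf h0 h1
    have bb := basic_bounds hP u v hf h0 h1
    have ig := int_mul hP hf h0 h1 (gf_cont u v)
    have e : ∀ x, f x * ‖x - a‖ ^ 2 = (0 + 1 * (f x * ‖x - cen‖ ^ 2) + (u^2 + v^2) * f x) +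
        (0 + (-2) * (f x * gf u v x) + 0 * f x) := by
      intro x; rw [dist_gf x a, ← hu, ← hv]; ring
    have j1 : Integrable (fun x => 0 + 1 * (f x * ‖x - cen‖ ^ 2) + (u^2 + v^2) * f x) P :=
      ((integrable_const _).add (ic.const_mul _)).add (if1.const_mul _)
    have j2 : Integrable (fun x => 0 + (-2) * (f x * gf u v x) + 0 * f x) P :=
      ((integrable_const _).add (ig.const_mul _)).add (if1.const_mul _)
    simp only [e]
    rw [integral_add j1 j2, integral_lin3 ic if1, integral_lin3 ig if1]
    obtain ⟨p, hp⟩ : ∃ p, p = ∫ x, f x ∂P := ⟨_, rfl⟩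
    obtain ⟨m, hm⟩ : ∃ m, m = ∫ x, f x * gf u v x ∂P := ⟨_, rfl⟩
    rw [← hp, ← hm] at hg bb ⊢
    obtain ⟨hp0, hp1, _⟩ := bb
    have hN : 0 ≤ u^2 + v^2 := by positivity
    -- `2 m ≤ N p + 2/27 (1 - p)`
    have : 2 * m ≤ (u^2 + v^2) * p + 2/27 * (1 - p) := by
      have hr : 0 ≤ (u^2 + v^2) * p + 2/27 * (1 - p) := by
        have := mul_nonneg hN hp0
        linarith
      apply (abs_le_of_sq_le_sq' _ hr).2
      nlinarith [sq_nonneg ((u^2 + v^2) * p - 2/27 * (1 - p))]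
    linarith
  · have hw' : wt a = 1/2 := hw
    rw [hw']
    obtain ⟨i, hi, hj⟩ := Dv_half hn
    have hc : Continuous (fun x => max (3 * bary i x - 2) 0) := by
      have := bary_cont i
      fun_prop
    have im := int_cont hP hc
    have ineq : ∀ᵐ x ∂P, (0 + 1 * (f x * ‖x - cen‖ ^ 2) + 2/27 * f x) ≤
        0 + 1 * (f x * ‖x - a‖ ^ 2) + 1/3 * max (3 * bary i x - 2) 0 := by
      filter_upwards [ae_bary hP] with x hx
      have hd := dist_bary x a
      have hs := bary_sum x
      obtain ⟨D, hD⟩ : ∃ D, D = Dv (cp a) (cq a) := ⟨_, rfl⟩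
      rw [← hD] at hd hi hj
      have hpos : bary 0 x * (1 - 27/2 * D 0) + bary 1 x * (1 - 27/2 * D 1)
          + bary 2 x * (1 - 27/2 * D 2) ≤ 9/2 * max (3 * bary i x - 2) 0 := by
        fin_cases i
        · have j1 := hj 1 (by decide)
          have j2 := hj 2 (by decide)
          simp only [Fin.zero_eta] at *
          exact affine_half (hx 0) (hx 1) (hx 2) hs (by linarith) (by linarith) (by linarith)
            (by linarith) (by linarith)
        · have j1 := hj 0 (by decide)
          have j2 := hj 2 (by decide)
          simp only [Fin.mk_one] at *
          have := affine_half (l0 := 1 - 27/2 * D 1) (l1 := 1 - 27/2 * D 0) (l2 := 1 - 27/2 * D 2)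
            (hx 1) (hx 0) (hx 2) (by linarith) (by linarith) (by linarith) (by linarith)
            (by linarith) (by linarith)
          linarith
        · have j1 := hj 0 (by decide)
          have j2 := hj 1 (by decide)
          simp only [Fin.reduceFinMk] at *
          have := affine_half (l0 := 1 - 27/2 * D 2) (l1 := 1 - 27/2 * D 0) (l2 := 1 - 27/2 * D 1)
            (hx 2) (hx 0) (hx 1) (by linarith) (by linarith) (by linarith) (by linarith)
            (by linarith) (by linarith)
          linarith
      have hm := le_max_right (3 * bary i x - 2) 0
      have hL : 2/27 - (‖x - a‖ ^ 2 - ‖x - cen‖ ^ 2) ≤ 1/3 * max (3 * bary i x - 2) 0 := by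
        rw [hd]; nlinarith
      have h2 := mul_le_mul_of_nonneg_left hL (h0 x)
      have h3 : f x * (1/3 * max (3 * bary i x - 2) 0) ≤ 1/3 * max (3 * bary i x - 2) 0 :=
        mul_le_of_le_one_left (by positivity) (h1 x)
      linarith
    have hI := integral_mono_ae (((integrable_const _).add (ic.const_mul _)).add (if1.const_mul _))
      (((integrable_const _).add (ia.const_mul _)).add (im.const_mul _)) ineq
    have e1 := integral_lin3 ic if1 0 1 (2/27)
    have e2 := integral_lin3 ia im 0 1 (1/3)
    rw [bary_pos_mean hP] at e2
    have hI' : ∫ x, (0 + 1 * (f x * ‖x - cen‖ ^ 2) + 2/27 * f x) ∂P ≤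
      ∫ x, (0 + 1 * (f x * ‖x - a‖ ^ 2) + 1/3 * max (3 * bary i x - 2) 0) ∂P := hI
    rw [e1, e2] at hI'
    linarith
  · have hw' : wt a = 0 := hw
    rw [hw']
    have hD := Dv_zero hn
    have ineq : ∀ᵐ x ∂P, (0 + 1 * (f x * ‖x - cen‖ ^ 2) + 2/27 * f x) ≤ f x * ‖x - a‖ ^ 2 := by
      filter_upwards [ae_bary hP] with x hx
      have hd := dist_bary x a
      have hs := bary_sum x
      have hL : 2/27 ≤ ‖x - a‖ ^ 2 - ‖x - cen‖ ^ 2 := by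
        rw [hd]
        have k0 := mul_le_mul_of_nonneg_left (hD 0) (hx 0)
        have k1 := mul_le_mul_of_nonneg_left (hD 1) (hx 1)
        have k2 := mul_le_mul_of_nonneg_left (hD 2) (hx 2)
        linarith
      have h2 := mul_le_mul_of_nonneg_left hL (h0 x)
      linarith
    have hI := integral_mono_ae (((integrable_const _).add (ic.const_mul _)).add (if1.const_mul _))
      ia ineq
    have e1 := integral_lin3 ic if1 0 1 (2/27)
    have hI' : ∫ x, (0 + 1 * (f x * ‖x - cen‖ ^ 2) + 2/27 * f x) ∂P ≤
      ∫ x, f x * ‖x - a‖ ^ 2 ∂P := hI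
    rw [e1] at hI'
    linarith

/-! ### The distance function to a finite family -/

/-- Squared distance to a finite family of points. -/
def d2 {ι : Type} [Fintype ι] [Nonempty ι] (a : ι → E2) (x : E2) : ℝ :=
  Finset.univ.inf' Finset.univ_nonempty (fun j => ‖x - a j‖ ^ 2)

lemma d2_cont {ι : Type} [Fintype ι] [Nonempty ι] (a : ι → E2) : Continuous (d2 a) := by
  unfold d2
  apply Continuous.finset_inf'_apply
  intro i _
  fun_prop

lemma d2_le {ι : Type} [Fintype ι] [Nonempty ι] (a : ι → E2) (x : E2) (j : ι) :
    d2 a x ≤ ‖x - a j‖ ^ 2 :=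
  Finset.inf'_le _ (Finset.mem_univ j)

lemma d2_eq {ι : Type} [Fintype ι] [Nonempty ι] (a : ι → E2) (x : E2) :
    ∃ j, d2 a x = ‖x - a j‖ ^ 2 := by
  obtain ⟨j, _, hj⟩ := Finset.exists_mem_eq_inf' (Finset.univ_nonempty (α := ι))
    (fun j => ‖x - a j‖ ^ 2)
  exact ⟨j, hj⟩

lemma d2_nonneg {ι : Type} [Fintype ι] [Nonempty ι] (a : ι → E2) (x : E2) : 0 ≤ d2 a x := by
  obtain ⟨j, hj⟩ := d2_eq a x
  rw [hj]; positivity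

lemma d2_T {ι : Type} [Fintype ι] [Nonempty ι] (a : ι → E2) (i : Fin 3) (x : E2) :
    d2 a (T i x) = 1/9 * d2 (fun j => Ti i (a j)) x := by
  apply le_antisymm
  · obtain ⟨j, hj⟩ := d2_eq (fun j => Ti i (a j)) x
    rw [hj, ← norm_T]
    exact d2_le _ _ _
  · obtain ⟨j, hj⟩ := d2_eq a (T i x)
    rw [hj, norm_T]
    have := d2_le (fun j => Ti i (a j)) x j
    linarith

lemma int_d2_selfsim (hP : RInv P) {ι : Type} [Fintype ι] [Nonempty ι] (a : ι → E2) :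
    ∫ x, d2 a x ∂P = 1/27 * (∫ x, d2 (fun j => Ti 0 (a j)) x ∂P
      + ∫ x, d2 (fun j => Ti 1 (a j)) x ∂P + ∫ x, d2 (fun j => Ti 2 (a j)) x ∂P) := by
  rw [integral_selfsim hP (int_cont hP (d2_cont a))]
  simp only [d2_T, integral_const_mul]
  ring

/-! ### Lower bound -/

lemma lower_base (hP : RInv P) {ι : Type} [Fintype ι] [Nonempty ι] (a : ι → E2) :
    13/54 ≤ ∫ x, d2 a x ∂P + 2/27 * ∑ j, wt (a j) := by
  let V : ι → Set E2 := fun j => {x | ‖x - a j‖ ^ 2 = d2 a x}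
  have hV : ∀ j, MeasurableSet (V j) := fun j =>
    (isClosed_eq (by fun_prop) (d2_cont a)).measurableSet
  let g : ι → E2 → ℝ := fun j => (V j).indicator (fun _ => 1)
  have hg : ∀ j, Measurable (g j) := fun j => measurable_const.indicator (hV j)
  have g0 : ∀ j x, 0 ≤ g j x := fun j x => Set.indicator_nonneg (fun _ _ => zero_le_one) x
  let s : E2 → ℝ := fun x => ∑ k, g k x
  have hs : Measurable s := Finset.measurable_fun_sum _ fun j _ => hg j
  have spos : ∀ x, 0 < s x := by
    intro x
    obtain ⟨j, hj⟩ := d2_eq a x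
    have h1 : g j x = 1 := Set.indicator_of_mem (show x ∈ V j from hj.symm) _
    have : g j x ≤ s x := Finset.single_le_sum (f := fun k => g k x) (fun k _ => g0 k x)
      (Finset.mem_univ j)
    linarith
  let f : ι → E2 → ℝ := fun j x => g j x / s x
  have hf : ∀ j, Measurable (f j) := fun j => (hg j).div hs
  have f0 : ∀ j x, 0 ≤ f j x := fun j x => div_nonneg (g0 j x) (spos x).le
  have fs : ∀ x, ∑ j, f j x = 1 := by
    intro x
    change ∑ j, g j x / s x = 1
    rw [← Finset.sum_div]
    exact div_self (spos x).ne'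
  have f1 : ∀ j x, f j x ≤ 1 := by
    intro j x
    rw [← fs x]
    exact Finset.single_le_sum (f := fun k => f k x) (fun k _ => f0 k x) (Finset.mem_univ j)
  have fd : ∀ j x, f j x * ‖x - a j‖ ^ 2 = f j x * d2 a x := by
    intro j x
    by_cases hx : x ∈ V j
    · have : ‖x - a j‖ ^ 2 = d2 a x := hx
      rw [this]
    · have : f j x = 0 := by
        change g j x / s x = 0
        have : g j x = 0 := Set.indicator_of_notMem hx _
        rw [this, zero_div]
      rw [this]; ring
  have key := Finset.sum_le_sum (s := Finset.univ) fun j _ =>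
    point_ineq hP (a j) (hf j) (f0 j) (f1 j)
  have if1 : ∀ j, Integrable (f j) P := by
    intro j
    have := int_mul hP (hf j) (f0 j) (f1 j) (F := fun _ => 1) continuous_const
    simpa using this
  simp only [fd] at key
  rw [Finset.sum_add_distrib, ← Finset.mul_sum, Finset.sum_sub_distrib,
    ← integral_finsetSum _ (fun j _ => if1 j),
    ← integral_finsetSum _ (fun j _ => int_mul hP (hf j) (f0 j) (f1 j) (by fun_prop)),
    ← integral_finsetSum _ (fun j _ => int_mul hP (hf j) (f0 j) (f1 j) (d2_cont a))] at key
  simp only [← Finset.sum_mul, fs, one_mul] at key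
  rw [cen_var hP] at key
  simp at key
  linarith

lemma lower_claim (hP : RInv P) (l : ℕ) : ∀ {ι : Type} [Fintype ι] [Nonempty ι] (a : ι → E2),
    13/2 * 3 ^ l / 27 ^ (l + 1) ≤ ∫ x, d2 a x ∂P + 2 / 27 ^ (l + 1) * ∑ j, wt (a j) := by
  induction l with
  | zero =>
    intro ι _ _ a
    have := lower_base hP a
    norm_num at this ⊢
    linarith
  | succ l ih =>
    intro ι _ _ a
    have h0 := ih (fun j => Ti 0 (a j))
    have h1 := ih (fun j => Ti 1 (a j))
    have h2 := ih (fun j => Ti 2 (a j))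
    have hw : ∑ j, wt (Ti 0 (a j)) + ∑ j, wt (Ti 1 (a j)) + ∑ j, wt (Ti 2 (a j))
        ≤ ∑ j, wt (a j) := by
      rw [← Finset.sum_add_distrib, ← Finset.sum_add_distrib]
      exact Finset.sum_le_sum fun j _ => wt_super (a j)
    rw [int_d2_selfsim hP a]
    have hc : (0:ℝ) ≤ 2 / 27 ^ (l + 1) := by positivity
    have hw2 := mul_le_mul_of_nonneg_left hw hc
    have e1 : (13/2 * 3 ^ (l + 1) / 27 ^ (l + 1 + 1) : ℝ)
        = 1/27 * (3 * (13/2 * 3 ^ l / 27 ^ (l + 1))) := by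
      field_simp; ring
    have e2 : (2 / 27 ^ (l + 1 + 1) : ℝ) = 1/27 * (2 / 27 ^ (l + 1)) := by
      field_simp; ring
    rw [e1, e2, mul_assoc]
    linarith

lemma lower_final (hP : RInv P) (l n : ℕ) {ι : Type} [Fintype ι] [Nonempty ι] (a : ι → E2)
    (hn : Fintype.card ι ≤ n) :
    (1 / 2) * (1 / 27 ^ (l + 1)) * (13 * 3 ^ l - 4 * (n : ℝ)) ≤ ∫ x, d2 a x ∂P := by
  have h := lower_claim hP l a
  have hw : ∑ j, wt (a j) ≤ n := by
    calc ∑ j, wt (a j) ≤ ∑ j : ι, (1:ℝ) := Finset.sum_le_sum fun j _ => chg_le_one _ _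
      _ = Fintype.card ι := by simp
      _ ≤ n := by exact_mod_cast hn
  have hc : (0:ℝ) ≤ 2 / 27 ^ (l + 1) := by positivity
  have hw2 := mul_le_mul_of_nonneg_left hw hc
  have e : (1 / 2) * (1 / 27 ^ (l + 1)) * (13 * 3 ^ l - 4 * (n : ℝ))
      = 13/2 * 3 ^ l / 27 ^ (l + 1) - 2 / 27 ^ (l + 1) * n := by ring
  rw [e]; linarith

/-! ### Upper bound -/

lemma upper_three (hP : RInv P) {ι : Type} [Fintype ι] [Nonempty ι] (c : ι → E2) (b : Fin 3 → ι) :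
    ∫ x, d2 c x ∂P ≤ 1/27 * ((∫ x, ‖x - Ti 0 (c (b 0))‖ ^ 2 ∂P) + (∫ x, ‖x - Ti 1 (c (b 1))‖ ^ 2 ∂P)
      + ∫ x, ‖x - Ti 2 (c (b 2))‖ ^ 2 ∂P) := by
  rw [int_d2_selfsim hP c]
  have h : ∀ i, ∫ x, d2 (fun j => Ti i (c j)) x ∂P ≤ ∫ x, ‖x - Ti i (c (b i))‖ ^ 2 ∂P := by
    intro i
    apply integral_mono (int_cont hP (d2_cont _)) (int_cont hP (by fun_prop))
    intro x
    exact d2_le (fun j => Ti i (c j)) x (b i)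
  have h0 := h 0
  have h1 := h 1
  have h2 := h 2
  linarith

lemma upper_glue (hP : RInv P) {ι κ₀ κ₁ κ₂ : Type} [Fintype ι] [Nonempty ι] [Fintype κ₀] [Nonempty κ₀]
    [Fintype κ₁] [Nonempty κ₁] [Fintype κ₂] [Nonempty κ₂] (c : ι → E2)
    (a₀ : κ₀ → E2) (a₁ : κ₁ → E2) (a₂ : κ₂ → E2)
    (h₀ : ∀ k, ∃ j, c j = T 0 (a₀ k)) (h₁ : ∀ k, ∃ j, c j = T 1 (a₁ k))
    (h₂ : ∀ k, ∃ j, c j = T 2 (a₂ k)) :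
    ∫ x, d2 c x ∂P ≤ 1/27 * (∫ x, d2 a₀ x ∂P + ∫ x, d2 a₁ x ∂P + ∫ x, d2 a₂ x ∂P) := by
  rw [int_d2_selfsim hP c]
  have h : ∀ (i : Fin 3) {κ : Type} [Fintype κ] [Nonempty κ] (a : κ → E2),
      (∀ k, ∃ j, c j = T i (a k)) →
      ∫ x, d2 (fun j => Ti i (c j)) x ∂P ≤ ∫ x, d2 a x ∂P := by
    intro i κ _ _ a ha
    apply integral_mono (int_cont hP (d2_cont _)) (int_cont hP (d2_cont _))
    intro x
    obtain ⟨k, hk⟩ := d2_eq a x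
    obtain ⟨j, hj⟩ := ha k
    have := d2_le (fun j => Ti i (c j)) x j
    simp only [hj, Ti_T'] at this
    change d2 (fun j => Ti i (c j)) x ≤ d2 a x
    rw [hk]; exact this
  have k0 := h 0 a₀ h₀
  have k1 := h 1 a₁ h₁
  have k2 := h 2 a₂ h₂
  linarith

lemma upper_claim (hP : RInv P) (l : ℕ) : ∀ n : ℕ, 3 ^ l ≤ n → n ≤ 3 ^ (l + 1) →
    ∃ (ι : Type) (_ : Fintype ι) (_ : Nonempty ι) (a : ι → E2), Fintype.card ι = n ∧
      ∫ x, d2 a x ∂P ≤ (1 / 2) * (1 / 27 ^ (l + 1)) * (13 * 3 ^ l - 4 * (n : ℝ)) := by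
  induction l with
  | zero =>
    intro n h1 h2
    have hs := s3
    norm_num at h1 h2
    have : n = 1 ∨ n = 2 ∨ n = 3 := by omega
    rcases this with rfl | rfl | rfl
    · refine ⟨Fin 1, inferInstance, inferInstance, ![cen], by simp, ?_⟩
      refine (upper_three hP _ ![0, 0, 0]).trans ?_
      simp only [norm_mean hP]
      simp [Ti_zero, Ti_one, cen_zero, cen_one, sx, sy]
      nlinarith
    · refine ⟨Fin 2, inferInstance, inferInstance, ![pt (1/2) (√3/18), T 2 cen], by simp, ?_⟩
      refine (upper_three hP _ ![0, 0, 1]).trans ?_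
      simp only [norm_mean hP]
      simp [Ti_zero, Ti_one, T_zero, T_one, pt_zero, pt_one, cen_zero, cen_one, sx, sy]
      nlinarith
    · refine ⟨Fin 3, inferInstance, inferInstance, fun i => T i cen, by simp, ?_⟩
      refine (upper_three hP _ id).trans ?_
      simp only [id, Ti_T', norm_mean hP]
      simp [cen_zero, cen_one]
      nlinarith
  | succ l ih =>
    intro n h1 h2
    rw [pow_succ] at h1 h2
    have q0 := ih (n / 3) (by omega) (by omega)
    have q1 := ih ((n + 1) / 3) (by omega) (by omega)
    have q2 := ih ((n + 2) / 3) (by omega) (by omega)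
    obtain ⟨κ₀, _, _, a₀, c₀, b₀⟩ := q0
    obtain ⟨κ₁, _, _, a₁, c₁, b₁⟩ := q1
    obtain ⟨κ₂, _, _, a₂, c₂, b₂⟩ := q2
    have hsum : n / 3 + ((n + 1) / 3 + (n + 2) / 3) = n := by omega
    refine ⟨κ₀ ⊕ (κ₁ ⊕ κ₂), inferInstance, inferInstance,
      Sum.elim (fun k => T 0 (a₀ k)) (Sum.elim (fun k => T 1 (a₁ k)) (fun k => T 2 (a₂ k))), ?_, ?_⟩
    · rw [Fintype.card_sum, Fintype.card_sum, c₀, c₁, c₂, hsum]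
    · refine (upper_glue hP _ a₀ a₁ a₂ (fun k => ⟨Sum.inl k, rfl⟩)
        (fun k => ⟨Sum.inr (Sum.inl k), rfl⟩) (fun k => ⟨Sum.inr (Sum.inr k), rfl⟩)).trans ?_
      have hc : ((n / 3 : ℕ) : ℝ) + (((n + 1) / 3 : ℕ) + ((n + 2) / 3 : ℕ)) = n := by
        exact_mod_cast hsum
      have e : (1 / 2) * (1 / 27 ^ (l + 1 + 1)) * (13 * 3 ^ (l + 1) - 4 * (n : ℝ)) =
          1/27 * ((1 / 2) * (1 / 27 ^ (l + 1)) * (13 * 3 ^ l - 4 * ((n / 3 : ℕ) : ℝ))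
          + (1 / 2) * (1 / 27 ^ (l + 1)) * (13 * 3 ^ l - 4 * (((n + 1) / 3 : ℕ) : ℝ))
          + (1 / 2) * (1 / 27 ^ (l + 1)) * (13 * 3 ^ l - 4 * (((n + 2) / 3 : ℕ) : ℝ))) := by
        rw [← hc]
        field_simp; ring
      rw [e]
      linarith

/-! ### Conversion to extended nonnegative reals -/

lemma iInf_range_d2 {ι : Type} [Fintype ι] [Nonempty ι] (a : ι → E2) (x : E2) :
    (⨅ y ∈ Set.range a, ENNReal.ofReal (‖x - y‖ ^ 2)) = ENNReal.ofReal (d2 a x) := by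
  rw [iInf_range]
  apply le_antisymm
  · obtain ⟨j, hj⟩ := d2_eq a x
    rw [hj]
    exact iInf_le _ j
  · exact le_iInf fun j => ENNReal.ofReal_le_ofReal (d2_le a x j)

lemma err_range (hP : RInv P) {ι : Type} [Fintype ι] [Nonempty ι] (a : ι → E2) :
    err P (Set.range a) = ENNReal.ofReal (∫ x, d2 a x ∂P) := by
  unfold err
  simp only [iInf_range_d2]
  exact (ofReal_integral_eq_lintegral_ofReal (int_cont hP (d2_cont a))
    (Filter.Eventually.of_forall (d2_nonneg a))).symm

lemma quantErr_eq (hP : RInv P) (n l : ℕ) (h1 : 3 ^ l ≤ n) (h2 : n < 3 ^ (l + 1)) :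
    quantErr P n
      = ENNReal.ofReal ((1 / 2) * (1 / 27 ^ (l + 1)) * (13 * 3 ^ l - 4 * (n : ℝ))) := by
  unfold quantErr
  apply le_antisymm
  · obtain ⟨ι, _, _, a, hc, ha⟩ := upper_claim hP l n h1 h2.le
    have hr : (Set.range a).ncard ≤ n := by
      rw [← hc, ← Nat.card_eq_fintype_card, ← Set.image_univ, ← Set.ncard_univ]
      exact Set.ncard_image_le Set.finite_univ
    refine le_trans (iInf₂_le (Set.range a) ⟨Set.finite_range a, hr⟩) ?_
    rw [err_range hP a]
    exact ENNReal.ofReal_le_ofReal ha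
  · refine le_iInf₂ fun α hα => ?_
    rcases α.eq_empty_or_nonempty with h | h
    · have : err P α = ⊤ := by
        unfold err
        subst h
        simp
      rw [this]; exact le_top
    · have : Fintype α := hα.1.fintype
      have : Nonempty α := h.to_subtype
      have e := err_range hP (fun x : α => (x : E2))
      rw [Subtype.range_coe] at e
      rw [e]
      apply ENNReal.ofReal_le_ofReal
      apply lower_final hP
      rw [← Nat.card_eq_fintype_card]
      exact hα.2

end meas

/-- For every n ≥ 3, with ℓ(n) the unique natural number satisfying 3^ℓ ≤ n < 3^{ℓ+1},
the n-th quantization error of the R-measure P is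
V_n(P) = (1/2)·(1/27^{ℓ+1})·(13·3^ℓ − 4n). -/
theorem stmt_16 (P : Measure E2) [IsProbabilityMeasure P]
    (hP : P = (3 : ℝ≥0∞)⁻¹ • (P.map S1 + P.map S2 + P.map S3))
    (n : ℕ) (hn : 3 ≤ n) (ℓ : ℕ) (h1 : 3 ^ ℓ ≤ n) (h2 : n < 3 ^ (ℓ + 1)) :
    quantErr P n
      = ENNReal.ofReal
          ((1 / 2) * (1 / 27 ^ (ℓ + 1)) * (13 * 3 ^ ℓ - 4 * (n : ℝ))) := by
  exact quantErr_eq (by unfold RInv; rw [← S1_eq, ← S2_eq, ← S3_eq]; exact hP) n ℓ h1 h2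

end
end
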